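/- arXiv:2306.03605 — 3 statements merged into one kernel-verified Lean document; each statement's English description precedes it below -/
import Mathlib

section
/- Let G be a finite simple graph, T ⊆ V(G) a set of terminals, and 𝒯 a partition of T. Then there exist a field F and a skew-symmetric matrix A over F indexed by T such that for every S ⊆ T: the principal submatrix A[S] is nonsingular if and only if S is Mader matchable in (G,𝒯). In other words, the Mader delta-matroid of (G,𝒯) admits a direct linear representation by a skew-symmetric matrix. -/
/-- A Mader path (`𝒯`-path) in `G` with respect to the terminal set `T` and the
partition of `T` induced by the block-labelling `σ`: a path whose endpoints are
terminals lying in distinct blocks, and whose internal vertices avoid `T`. -/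
def IsMaderPath {V : Type*} (G : SimpleGraph V) (T : Finset V) (σ : V → ℕ)
    {u v : V} (p : G.Walk u v) : Prop :=
  p.IsPath ∧ u ∈ T ∧ v ∈ T ∧ σ u ≠ σ v ∧
    ∀ x ∈ p.support, x ∈ T → x = u ∨ x = v

/-- `S` is Mader matchable in `(G, 𝒯)`: there is a collection of pairwise
vertex-disjoint Mader paths whose set of endpoints is exactly `S`. -/
def MaderMatchable {V : Type*} (G : SimpleGraph V) (T : Finset V) (σ : V → ℕ)
    (S : Finset V) : Prop :=
  ∃ (n : ℕ) (a b : Fin n → V) (p : ∀ i, G.Walk (a i) (b i)),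
    (∀ i, IsMaderPath G T σ (p i)) ∧
    (∀ i j, i ≠ j → ∀ x, x ∈ (p i).support → x ∉ (p j).support) ∧
    (∀ x, x ∈ S ↔ ∃ i, x = a i ∨ x = b i)

/-!
Let every vertex carry a subspace of the plane `K × K`: a terminal in use the line of its block, an
unused terminal `⊥`, and every other vertex the whole plane. A symmetric matrix of weights on the
edges and the diagonal multiplies the determinant form of the plane into an alternating form on
`V → K × K`, which we restrict to the product of these subspaces.

If the restriction is nondegenerate, symplectic reduction moves the line at a vertex along an edge
of nonzero weight to a vertex whose subspace it does not contain: either the whole plane, which the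
line replaces, or a different line, which completes a Mader path. Repeating this matches all
terminals in use. Conversely, the edges of disjoint Mader paths with all diagonal weights `1` give a
nondegenerate restriction. As nondegeneracy is the nonvanishing of a polynomial in the weights, over
an infinite field a single choice of weights serves all sets `S` of used terminals at once. The
skew-symmetric matrix on the terminals is then the Schur complement, in the form for `S = T`, of the
space for `S = ∅`.
-/

open LinearMap (BilinForm)

namespace Mader

section BilinForm

variable {K M : Type*} [Field K] [AddCommGroup M] [Module K M] {B : BilinForm K M}

lemma nondegenerate_restrict_iff (hB : B.IsRefl) {W : Submodule K M} :
    (B.restrict W).Nondegenerate ↔ ∀ z ∈ W, (∀ x ∈ W, B x z = 0) → z = 0 := by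
  refine ⟨fun h z hz hzW ↦ ?_, fun h ↦ ?_⟩
  · exact congrArg Subtype.val (h.2 ⟨z, hz⟩ fun x ↦ hzW x x.2)
  · refine B.nondegenerate_restrict_of_disjoint_orthogonal hB ?_
    exact Submodule.disjoint_def.2 fun z hz hzW ↦ h z hz hzW

/-- Symplectic reduction: `y` spans the radical of its own orthogonal complement in `W`, so any
hyperplane of that complement missing `y` is again nondegenerate. -/
lemma nondegenerate_restrict_inf_ker (hB : B.IsAlt) {W : Submodule K M}
    (hW : (B.restrict W).Nondegenerate) {y : M} (hy : y ∈ W) {ψ : Module.Dual K M}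
    (hψ : ψ y ≠ 0) :
    (B.restrict (W ⊓ LinearMap.ker (B.flip y) ⊓ LinearMap.ker ψ)).Nondegenerate := by
  have hW' := (nondegenerate_restrict_iff hB.isRefl).1 hW
  refine (nondegenerate_restrict_iff hB.isRefl).2 ?_
  rintro z ⟨⟨hz, hzy⟩, hzψ⟩ horth
  replace hzy : B z y = 0 := hzy
  replace hzψ : ψ z = 0 := hzψ
  have horth_perp : ∀ x ∈ W, B x y = 0 → B x z = 0 := fun x hx hxy ↦ by
    have hmem : x - (ψ x / ψ y) • y ∈ W ⊓ LinearMap.ker (B.flip y) ⊓ LinearMap.ker ψ := by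
      refine ⟨⟨W.sub_mem hx (W.smul_mem _ hy), ?_⟩, ?_⟩
      · simp [hxy, hB.self_eq_zero]
      · simp [hψ]
    simpa [hB.eq_iff.1 hzy] using horth _ hmem
  obtain ⟨x₀, hx₀, hx₀y⟩ : ∃ x₀ ∈ W, B x₀ y ≠ 0 := by
    by_contra! h
    exact hψ (by rw [hW' y hy h, map_zero])
  have hz_eq : z - (B x₀ z / B x₀ y) • y = 0 := by
    refine hW' _ (W.sub_mem hz (W.smul_mem _ hy)) fun x hx ↦ ?_
    have hx' := horth_perp (x - (B x y / B x₀ y) • x₀) (W.sub_mem hx (W.smul_mem _ hx₀))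
      (by simp [hx₀y])
    simp only [map_sub, map_smul, LinearMap.sub_apply, LinearMap.smul_apply, smul_eq_mul] at hx' ⊢
    linear_combination hx'
  have hcoeff : B x₀ z / B x₀ y = 0 := by
    have := congrArg ψ hz_eq
    simpa [hzψ, hψ] using this
  simpa [hcoeff] using hz_eq

lemma exists_forall_apply_eq_of_nondegenerate_restrict [FiniteDimensional K M] {W : Submodule K M}
    (hW : (B.restrict W).Nondegenerate) (φ : Module.Dual K M) :
    ∃ y ∈ W, ∀ x ∈ W, B x y = φ x := by
  let y := (BilinForm.toDual _ hW.flip).symm (φ ∘ₗ W.subtype)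
  exact ⟨y, y.2, fun x hx ↦ BilinForm.apply_toDual_symm_apply (hB := hW.flip) _ (⟨x, hx⟩ : W)⟩

lemma nondegenerate_restrict_sup_iff (hB : B.IsRefl) {U P : Submodule K M}
    (hU : (B.restrict U).Nondegenerate) (hP : P ≤ B.orthogonal U) :
    (B.restrict (U ⊔ P)).Nondegenerate ↔ (B.restrict P).Nondegenerate := by
  rw [nondegenerate_restrict_iff hB] at hU
  rw [nondegenerate_restrict_iff hB, nondegenerate_restrict_iff hB]
  constructor
  · intro h z hz hzP
    refine h z (Submodule.mem_sup_right hz) fun x hx ↦ ?_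
    obtain ⟨u, hu, p, hp, rfl⟩ := Submodule.mem_sup.1 hx
    simp [hP hz u hu, hzP p hp]
  · intro h z hz hzUP
    obtain ⟨u, hu, p, hp, rfl⟩ := Submodule.mem_sup.1 hz
    have hu0 : u = 0 := hU u hu fun x hx ↦ by
      simpa [hP hp x hx] using hzUP x (Submodule.mem_sup_left hx)
    have hp0 : p = 0 := h p hp fun x hx ↦ by
      simpa [hu0] using hzUP x (Submodule.mem_sup_right hx)
    rw [hu0, hp0, add_zero]

lemma det_gram_ne_zero_iff {ι : Type*} [Fintype ι] [DecidableEq ι] {e : ι → M}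
    (he : LinearIndependent K e) :
    (Matrix.of fun i j ↦ B (e i) (e j)).det ≠ 0 ↔
      (B.restrict (Submodule.span K (Set.range e))).Nondegenerate := by
  rw [BilinForm.nondegenerate_iff_det_ne_zero (Module.Basis.span he)]
  have : LinearMap.BilinForm.toMatrix (Module.Basis.span he) (B.restrict _) =
      Matrix.of fun i j ↦ B (e i) (e j) := by
    ext i j
    simp [LinearMap.BilinForm.toMatrix_apply, Module.Basis.span_apply]
  rw [this]

/-- The matrix is the Gram matrix of the projections of the `e i` to the orthogonal complement of
`U`, a coordinate-free Schur complement. -/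
lemma exists_skew_matrix_det_submatrix_ne_zero_iff [FiniteDimensional K M] (hB : B.IsAlt)
    {U : Submodule K M} (hU : (B.restrict U).Nondegenerate) {ι : Type*} [DecidableEq ι]
    {e : ι → M} (he : LinearIndependent K (U.mkQ ∘ e)) :
    ∃ A : Matrix ι ι K, (∀ i j, A i j = -A j i) ∧ (∀ i, A i i = 0) ∧ ∀ S : Finset ι,
      (A.submatrix (fun i : S ↦ (i : ι)) (fun i : S ↦ (i : ι))).det ≠ 0 ↔
        (B.restrict (U ⊔ Submodule.span K (e '' S))).Nondegenerate := by
  have hcompl : IsCompl U (B.orthogonal U) :=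
    BilinForm.isCompl_orthogonal_of_restrict_nondegenerate hB.isRefl hU
  have hproj : ∀ i, ∃ f ∈ B.orthogonal U, U.mkQ f = U.mkQ (e i) := fun i ↦ by
    obtain ⟨u, hu, f, hf, hsum⟩ := Submodule.mem_sup.1
      (hcompl.sup_eq_top ▸ Submodule.mem_top : e i ∈ U ⊔ B.orthogonal U)
    exact ⟨f, hf, by simp [← hsum, (Submodule.Quotient.mk_eq_zero U).2 hu]⟩
  choose f hf hfe using hproj
  have hfe' : U.mkQ ∘ f = U.mkQ ∘ e := funext hfe
  have hf_indep : LinearIndependent K f := .of_comp U.mkQ (by rwa [hfe'])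
  refine ⟨Matrix.of fun i j ↦ B (f i) (f j), fun i j ↦ (hB.neg_eq _ _).symm,
    fun i ↦ hB.self_eq_zero _, fun S ↦ ?_⟩
  have hspan : U ⊔ Submodule.span K (e '' S) = U ⊔ Submodule.span K (f '' S) := by
    rw [← Submodule.comap_map_mkQ, ← Submodule.comap_map_mkQ, Submodule.map_span,
      Submodule.map_span, ← Set.image_comp, ← Set.image_comp, hfe']
  have hspan_le : Submodule.span K (f '' S) ≤ B.orthogonal U :=
    Submodule.span_le.2 (Set.image_subset_iff.2 fun i _ ↦ hf i)
  rw [hspan, nondegenerate_restrict_sup_iff hB.isRefl hU hspan_le,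
    ← Subtype.range_coe (s := (S : Set ι)), ← Set.range_comp]
  exact det_gram_ne_zero_iff (hf_indep.comp _ Subtype.val_injective)

lemma exists_mvPolynomial_eval_ne_zero_iff_nondegenerate [FiniteDimensional K M] {ι : Type*}
    [Fintype ι] (B : ι → BilinForm K M) (W : Submodule K M) :
    ∃ p : MvPolynomial ι K, ∀ x : ι → K,
      MvPolynomial.eval x p ≠ 0 ↔ ((∑ k, x k • B k).restrict W).Nondegenerate := by
  let w := Module.finBasis K W
  let P : Matrix (Fin _) (Fin _) (MvPolynomial ι K) :=
    Matrix.of fun i j ↦ ∑ k, MvPolynomial.X k * MvPolynomial.C (B k (w i) (w j))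
  refine ⟨P.det, fun x ↦ ?_⟩
  have hP : (MvPolynomial.eval x).mapMatrix P =
      LinearMap.BilinForm.toMatrix w ((∑ k, x k • B k).restrict W) := by
    ext i j
    simp [P, LinearMap.BilinForm.toMatrix_apply]
  rw [RingHom.map_det, hP, BilinForm.nondegenerate_iff_det_ne_zero w]

lemma exists_forall_nondegenerate_restrict_sum [Infinite K] [FiniteDimensional K M] {J : Type*}
    [Fintype J] {B : J → BilinForm K M} {W : J → Submodule K M}
    (h : ∀ j, ((B j).restrict (W j)).Nondegenerate) :
    ∃ x : J → K, ∀ j, ((∑ k, x k • B k).restrict (W j)).Nondegenerate := by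
  classical
  choose p hp using fun j ↦ exists_mvPolynomial_eval_ne_zero_iff_nondegenerate B (W j)
  have hp_ne : ∀ j, p j ≠ 0 := fun j hj ↦
    (hp j (Pi.single j 1)).2 (by simpa [Pi.single_apply] using h j) (by simp [hj])
  obtain ⟨x, hx⟩ : ∃ x, MvPolynomial.eval x (∏ j, p j) ≠ 0 := by
    by_contra! hzero
    exact Finset.prod_ne_zero_iff.2 (fun j _ ↦ hp_ne j) (MvPolynomial.funext (by simpa using hzero))
  rw [map_prod, Finset.prod_ne_zero_iff] at hx
  exact ⟨x, fun j ↦ (hp j x).1 (hx j (Finset.mem_univ j))⟩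

end BilinForm

section Plane

variable {K : Type*} [Field K]

/-- The determinant as an alternating form on the plane, for which every line is its own orthogonal
complement. -/
def detForm (K : Type*) [Field K] : BilinForm K (K × K) :=
  LinearMap.mk₂ K (fun a b ↦ a.1 * b.2 - a.2 * b.1)
    (fun a a' b ↦ by simp only [Prod.fst_add, Prod.snd_add]; ring)
    (fun c a b ↦ by simp only [Prod.smul_fst, Prod.smul_snd, smul_eq_mul]; ring)
    (fun a b b' ↦ by simp only [Prod.fst_add, Prod.snd_add]; ring)
    (fun c a b ↦ by simp only [Prod.smul_fst, Prod.smul_snd, smul_eq_mul]; ring)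

lemma detForm_apply (a b : K × K) : detForm K a b = a.1 * b.2 - a.2 * b.1 := rfl

lemma detForm_eq_zero_iff_mem_span_singleton {a b : K × K} (ha : a ≠ 0) :
    detForm K a b = 0 ↔ b ∈ K ∙ a := by
  rw [detForm_apply, Submodule.mem_span_singleton]
  constructor
  · intro h
    rcases eq_or_ne a.1 0 with h₁ | h₁
    · have h₂ : a.2 ≠ 0 := fun h₂ ↦ ha (Prod.ext h₁ h₂)
      refine ⟨b.2 / a.2, Prod.ext ?_ (by simp [h₂])⟩
      simp only [Prod.smul_fst, smul_eq_mul]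
      field_simp
      linear_combination h
    · refine ⟨b.1 / a.1, Prod.ext (by simp [h₁]) ?_⟩
      simp only [Prod.smul_snd, smul_eq_mul]
      field_simp
      linear_combination -h
  · rintro ⟨c, rfl⟩
    simp only [Prod.smul_fst, Prod.smul_snd, smul_eq_mul]
    ring

lemma eq_zero_of_forall_detForm_eq_zero {b : K × K} (h : ∀ a, detForm K a b = 0) : b = 0 :=
  Prod.ext (by simpa [detForm_apply] using h (0, 1)) (by simpa [detForm_apply] using h (1, 0))

lemma eq_bot_or_isAtom_or_eq_top (ℓ : Submodule K (K × K)) : ℓ = ⊥ ∨ IsAtom ℓ ∨ ℓ = ⊤ := by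
  have : Module.finrank K ℓ ≤ 2 := by simpa using ℓ.finrank_le
  interval_cases h : Module.finrank K ℓ
  · exact .inl (Submodule.finrank_eq_zero.1 h)
  · exact .inr (.inl (Submodule.isAtom_iff_finrank_eq_one.2 h))
  · exact .inr (.inr (Submodule.eq_top_of_finrank_eq (by simpa using h)))

lemma not_isAtom_top : ¬ IsAtom (⊤ : Submodule K (K × K)) := by
  simp [Submodule.isAtom_iff_finrank_eq_one]

lemma mem_of_forall_detForm_eq_zero {ℓ : Submodule K (K × K)} (hℓ : IsAtom ℓ) {b : K × K}
    (h : ∀ a ∈ ℓ, detForm K a b = 0) : b ∈ ℓ := by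
  obtain ⟨a, ha, rfl⟩ := (atom_iff_nonzero_span ℓ).1 hℓ
  exact (detForm_eq_zero_iff_mem_span_singleton ha).1 (h a (Submodule.mem_span_singleton_self a))

lemma eq_zero_of_mem_of_forall_detForm_eq_zero {ℓ : Submodule K (K × K)} (hℓ : ¬ IsAtom ℓ)
    {b : K × K} (hb : b ∈ ℓ) (h : ∀ a ∈ ℓ, detForm K a b = 0) : b = 0 := by
  rcases eq_bot_or_isAtom_or_eq_top ℓ with rfl | hatom | rfl
  · simpa using hb
  · exact absurd hatom hℓ
  · exact eq_zero_of_forall_detForm_eq_zero fun a ↦ h a Submodule.mem_top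

end Plane

section WeightedForm

variable {V K : Type*} [Fintype V] [Field K] {X : Matrix V V K}

/-- The form on `V → K × K` whose blocks are the multiples `X v u • detForm K`: the
Kronecker product of `X` with the determinant form. -/
def weightedDetForm : Matrix V V K →ₗ[K] BilinForm K (V → K × K) where
  toFun X := ∑ v, ∑ u, X v u • (detForm K).compl₁₂ (LinearMap.proj v) (LinearMap.proj u)
  map_add' X Y := by simp only [Matrix.add_apply, add_smul, Finset.sum_add_distrib]
  map_smul' c X := by
    simp only [Matrix.smul_apply, smul_assoc, Finset.smul_sum, RingHom.id_apply]

lemma weightedDetForm_apply (y z : V → K × K) :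
    weightedDetForm X y z = ∑ v, detForm K (y v) (∑ u, X v u • z u) := by
  simp [weightedDetForm]

lemma weightedDetForm_single_apply [DecidableEq V] (v : V) (a : K × K) (z : V → K × K) :
    weightedDetForm X (Pi.single v a) z = detForm K a (∑ u, X v u • z u) := by
  rw [weightedDetForm_apply, Finset.sum_eq_single v (fun u _ hu ↦ by simp [hu]) (by simp),
    Pi.single_eq_same]

lemma weightedDetForm_isAlt (hX : X.IsSymm) : (weightedDetForm X).IsAlt := fun y ↦ by
  have hswap : ∑ v, ∑ u, X v u * ((y v).2 * (y u).1) = ∑ v, ∑ u, X v u * ((y v).1 * (y u).2) := by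
    rw [Finset.sum_comm]
    exact Finset.sum_congr rfl fun v _ ↦ Finset.sum_congr rfl fun u _ ↦ by
      rw [hX.apply, mul_comm (y u).2]
  simp only [weightedDetForm_apply, map_sum, map_smul, smul_eq_mul, detForm_apply, mul_sub,
    Finset.sum_sub_distrib, hswap, sub_self]

/-- Nondegeneracy of `weightedDetForm X` on the vectors `y` with `y v ∈ ℓ v` for all `v`. -/
def IsNondegenerateOn (X : Matrix V V K) (ℓ : V → Submodule K (K × K)) : Prop :=
  ((weightedDetForm X).restrict (Submodule.pi Set.univ ℓ)).Nondegenerate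

lemma isNondegenerateOn_of_forall_eq_zero (hX : X.IsSymm) {ℓ : V → Submodule K (K × K)}
    (h : ∀ y : V → K × K, (∀ v, y v ∈ ℓ v) →
      (∀ v, ∀ a ∈ ℓ v, detForm K a (∑ u, X v u • y u) = 0) → y = 0) :
    IsNondegenerateOn X ℓ := by
  classical
  refine (nondegenerate_restrict_iff (weightedDetForm_isAlt hX).isRefl).2 fun y hy horth ↦
    h y (fun v ↦ hy v trivial) fun v a ha ↦ ?_
  rw [← weightedDetForm_single_apply]
  exact horth _ (Submodule.le_comap_single_pi ℓ ha)

end WeightedForm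

section Linking

variable {V K : Type*} [Field K] {G : SimpleGraph V} {ℓ : V → Submodule K (K × K)}

/-- The symmetric matrices supported on the diagonal and the edges of `G`. -/
def edgeWeights (K : Type*) [Field K] (G : SimpleGraph V) : Submodule K (Matrix V V K) where
  carrier := {X | X.IsSymm ∧ ∀ v u, X v u ≠ 0 → v = u ∨ G.Adj v u}
  zero_mem' := ⟨Matrix.isSymm_zero, fun v u h ↦ absurd rfl h⟩
  add_mem' {X Y} hX hY := ⟨hX.1.add hY.1, fun v u h ↦ by
    by_cases hXvu : X v u = 0
    · exact hY.2 v u fun hYvu ↦ h (by simp [hXvu, hYvu])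
    · exact hX.2 v u hXvu⟩
  smul_mem' c X hX := ⟨hX.1.smul c, fun v u h ↦ hX.2 v u (right_ne_zero_of_mul h)⟩

lemma one_add_adjMatrix_ne_zero_iff [DecidableEq V] {H : SimpleGraph V} [DecidableRel H.Adj]
    {v u : V} : (1 + H.adjMatrix K) v u ≠ 0 ↔ v = u ∨ H.Adj v u := by
  rcases eq_or_ne v u with rfl | hvu
  · simp
  · simp [hvu]

lemma one_add_adjMatrix_mem_edgeWeights [DecidableEq V] {H : SimpleGraph V} [DecidableRel H.Adj]
    (hHG : H ≤ G) : 1 + H.adjMatrix K ∈ edgeWeights K G :=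
  ⟨Matrix.isSymm_one.add H.isSymm_adjMatrix,
    fun _ _ h ↦ (one_add_adjMatrix_ne_zero_iff.1 h).imp_right (hHG ·)⟩

/-- A path between vertices carrying distinct lines whose inner vertices carry the whole plane.
It is a Mader path if every terminal carries the line of its block and every other vertex the
plane. -/
structure IsLinkingPath (ℓ : V → Submodule K (K × K)) {s t : V} (p : G.Walk s t) : Prop where
  isPath : p.IsPath
  isAtom_start : IsAtom (ℓ s)
  isAtom_end : IsAtom (ℓ t)
  ne : ℓ s ≠ ℓ t
  eq_top : ∀ x ∈ p.support, x = s ∨ x = t ∨ ℓ x = ⊤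

/-- Disjoint linking paths cover all the vertices carrying lines. This is Mader matchability for an
assignment `ℓ` of subspaces of the plane, where a vertex carrying `⊥` counts as deleted. -/
def Linkable (G : SimpleGraph V) (ℓ : V → Submodule K (K × K)) : Prop :=
  ∃ (n : ℕ) (a b : Fin n → V) (p : ∀ i, G.Walk (a i) (b i)),
    (∀ i, IsLinkingPath ℓ (p i)) ∧
    (∀ i j, i ≠ j → ∀ x, x ∈ (p i).support → x ∉ (p j).support) ∧
    (∀ x, IsAtom (ℓ x) → ∃ i, x = a i ∨ x = b i)

lemma IsLinkingPath.ne_bot {s t : V} {p : G.Walk s t} (hp : IsLinkingPath ℓ p) {x : V}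
    (hx : x ∈ p.support) : ℓ x ≠ ⊥ := by
  rcases hp.eq_top x hx with rfl | rfl | htop
  · exact hp.isAtom_start.1
  · exact hp.isAtom_end.1
  · exact htop ▸ top_ne_bot

lemma IsLinkingPath.reverse {s t : V} {p : G.Walk s t} (hp : IsLinkingPath ℓ p) :
    IsLinkingPath ℓ p.reverse :=
  ⟨hp.isPath.reverse, hp.isAtom_end, hp.isAtom_start, hp.ne.symm,
    fun x hx ↦ or_left_comm.1 (hp.eq_top x (by simpa using hx))⟩

lemma IsLinkingPath.cons {ℓ' : V → Submodule K (K × K)} {s u t : V} {p : G.Walk u t}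
    (hp : IsLinkingPath ℓ' p) (hsu : G.Adj s u) (hs : ℓ' s = ⊥) (hu : ℓ' u = ℓ s) (htop : ℓ u = ⊤)
    (hℓ' : ∀ x, x ≠ s → x ≠ u → ℓ' x = ℓ x) : IsLinkingPath ℓ (p.cons hsu) := by
  have hps : ∀ x ∈ p.support, x ≠ s := by
    rintro x hx rfl
    exact hp.ne_bot hx hs
  have htu : t ≠ u := by
    rintro rfl
    exact hp.ne rfl
  have ht := hℓ' t (hps t p.end_mem_support) htu
  refine ⟨hp.isPath.cons fun hsp ↦ hps s hsp rfl, hu ▸ hp.isAtom_start, ht ▸ hp.isAtom_end,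
    hu ▸ ht ▸ hp.ne, fun x hx ↦ ?_⟩
  rcases List.mem_cons.1 hx with rfl | hx
  · exact .inl rfl
  rcases eq_or_ne x u with rfl | hxu
  · exact .inr (.inr htop)
  · exact .inr (hℓ' x (hps x hx) hxu ▸ (hp.eq_top x hx).resolve_left hxu)

lemma Linkable.of_isLinkingPath {ℓ' : V → Submodule K (K × K)} {s t : V} {p : G.Walk s t}
    (hp : IsLinkingPath ℓ p) (h_mem : ∀ x ∈ p.support, ℓ' x = ⊥)
    (h_notMem : ∀ x ∉ p.support, ℓ' x = ℓ x) (h : Linkable G ℓ') : Linkable G ℓ := by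
  obtain ⟨n, a, b, q, hq, hdisj, hcover⟩ := h
  have hqp : ∀ i, ∀ x ∈ (q i).support, x ∉ p.support :=
    fun i x hx hxp ↦ (hq i).ne_bot hx (h_mem x hxp)
  have hq_linking : ∀ i, IsLinkingPath ℓ (q i) := fun i ↦ by
    have hℓ : ∀ x ∈ (q i).support, ℓ' x = ℓ x := fun x hx ↦ h_notMem x (hqp i x hx)
    have ha := hℓ _ (q i).start_mem_support
    have hb := hℓ _ (q i).end_mem_support
    exact ⟨(hq i).isPath, ha ▸ (hq i).isAtom_start, hb ▸ (hq i).isAtom_end, ha ▸ hb ▸ (hq i).ne,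
      fun x hx ↦ hℓ x hx ▸ (hq i).eq_top x hx⟩
  refine ⟨n + 1, Fin.cons s a, Fin.cons t b, Fin.cases p q, Fin.cases hp hq_linking, ?_, ?_⟩
  · refine Fin.cases (Fin.cases (fun h ↦ absurd rfl h) fun j _ x hxp hxq ↦ hqp j x hxq hxp)
      fun i ↦ Fin.cases (fun _ ↦ hqp i) fun j hij ↦ hdisj i j (ne_of_apply_ne _ hij)
  · intro x hx
    by_cases hxp : x ∈ p.support
    · rcases hp.eq_top x hxp with rfl | rfl | htop
      · exact ⟨0, .inl rfl⟩
      · exact ⟨0, .inr rfl⟩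
      · exact absurd (htop ▸ hx) not_isAtom_top
    · obtain ⟨i, hi⟩ := hcover x (h_notMem x hxp ▸ hx)
      exact ⟨i.succ, hi⟩

lemma mem_pi_update_bot_update_inf_iff [DecidableEq V] {s u : V} (hus : u ≠ s) {w : V → K × K} :
    w ∈ Submodule.pi Set.univ (Function.update (Function.update ℓ s ⊥) u (ℓ u ⊓ ℓ s)) ↔
      (w ∈ Submodule.pi Set.univ ℓ ∧ w s = 0) ∧ w u ∈ ℓ s := by
  simp only [Submodule.mem_pi, Set.mem_univ, true_imp_iff]
  constructor
  · intro h
    have hu : w u ∈ ℓ u ⊓ ℓ s := by simpa using h u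
    have hs : w s = 0 := by simpa [hus.symm] using h s
    refine ⟨⟨fun v ↦ ?_, hs⟩, hu.2⟩
    rcases eq_or_ne v u with rfl | hvu
    · exact hu.1
    rcases eq_or_ne v s with rfl | hvs
    · exact hs ▸ zero_mem _
    · simpa [hvu, hvs] using h v
  · rintro ⟨⟨h, hs⟩, hu⟩ v
    rcases eq_or_ne v u with rfl | hvu
    · simpa using ⟨h v, hu⟩
    rcases eq_or_ne v s with rfl | hvs
    · simp [hvu, hs]
    · simpa [hvu, hvs] using h v

variable [Fintype V] {X : Matrix V V K}

lemma exists_isNondegenerateOn_update [DecidableEq V] (hX : X.IsSymm) {s : V} (hs : IsAtom (ℓ s))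
    (h : IsNondegenerateOn X ℓ) : ∃ u, X s u ≠ 0 ∧ ¬ ℓ u ≤ ℓ s ∧
      IsNondegenerateOn X (Function.update (Function.update ℓ s ⊥) u (ℓ u ⊓ ℓ s)) := by
  obtain ⟨a, ha, hsa⟩ := (atom_iff_nonzero_span _).1 hs
  obtain ⟨f, hfa⟩ : ∃ f : Module.Dual K (K × K), f a ≠ 0 := by
    by_contra! hf
    exact ha ((Module.forall_dual_apply_eq_zero_iff K a).1 hf)
  obtain ⟨y, hy, hyf⟩ := exists_forall_apply_eq_of_nondegenerate_restrict h (f ∘ₗ LinearMap.proj s)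
  have hrow : ∑ u, X s u * detForm K a (y u) = f a := by
    have ha_mem : Pi.single s a ∈ Submodule.pi Set.univ ℓ :=
      Submodule.le_comap_single_pi ℓ (hsa ▸ Submodule.mem_span_singleton_self a)
    simpa [weightedDetForm_single_apply] using hyf _ ha_mem
  obtain ⟨u, -, hu⟩ := Finset.exists_ne_zero_of_sum_ne_zero (hrow ▸ hfa)
  have hyu : detForm K a (y u) ≠ 0 := right_ne_zero_of_mul hu
  have hyu_notMem : y u ∉ ℓ s := by rwa [hsa, ← detForm_eq_zero_iff_mem_span_singleton ha]
  have hus : u ≠ s := fun h ↦ hyu_notMem (h ▸ hy u trivial)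
  have hf_zero : ∀ b ∈ ℓ s, f b = 0 ↔ b = 0 := by
    rintro b hb
    obtain ⟨c, rfl⟩ := Submodule.mem_span_singleton.1 (hsa ▸ hb)
    simp [hfa, ha]
  refine ⟨u, left_ne_zero_of_mul hu, fun hle ↦ hyu_notMem (hle (hy u trivial)), ?_⟩
  have hpi : Submodule.pi Set.univ (Function.update (Function.update ℓ s ⊥) u (ℓ u ⊓ ℓ s)) =
      Submodule.pi Set.univ ℓ ⊓ LinearMap.ker ((weightedDetForm X).flip y) ⊓
        LinearMap.ker (detForm K a ∘ₗ LinearMap.proj u) := by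
    ext w
    rw [mem_pi_update_bot_update_inf_iff hus, hsa, ← detForm_eq_zero_iff_mem_span_singleton ha]
    refine and_congr_left' (and_congr_right fun hw ↦ ?_)
    rw [← hf_zero _ (hw s trivial)]
    exact Eq.congr_left (hyf w hw).symm
  rw [IsNondegenerateOn, hpi]
  exact nondegenerate_restrict_inf_ker (weightedDetForm_isAlt hX) h hy hyu

lemma exists_isLinkingPath_of_isNondegenerateOn (hX : X ∈ edgeWeights K G) {s : V}
    (hs : IsAtom (ℓ s)) (h : IsNondegenerateOn X ℓ) :
    ∃ (t : V) (p : G.Walk s t) (ℓ' : V → Submodule K (K × K)), IsLinkingPath ℓ p ∧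
      (∀ x ∈ p.support, ℓ' x = ⊥) ∧ (∀ x ∉ p.support, ℓ' x = ℓ x) ∧ IsNondegenerateOn X ℓ' := by
  classical
  induction ℓ using WellFoundedLT.induction generalizing s with | ind ℓ ih
  obtain ⟨u, hXu, hus, hu⟩ := exists_isNondegenerateOn_update hX.1 hs h
  have hsu : s ≠ u := fun h ↦ hus (h ▸ le_rfl)
  have hadj : G.Adj s u := (hX.2 s u hXu).resolve_left hsu
  rcases eq_bot_or_isAtom_or_eq_top (ℓ u) with hbot | hatom | htop
  · exact absurd (hbot ▸ bot_le) hus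
  · have hne : ℓ s ≠ ℓ u := fun h ↦ hus h.ge
    refine ⟨u, hadj.toWalk, _, ⟨by simp [hsu], hs, hatom, hne, by simp⟩, ?_, ?_, hu⟩
    · simp [hsu, disjoint_iff.1 (hatom.disjoint_of_ne hs hne.symm)]
    · simp +contextual [Function.update_of_ne]
  · rw [htop, top_inf_eq] at hu
    set ℓ₁ := Function.update (Function.update ℓ s ⊥) u (ℓ s) with hℓ₁
    have hℓ₁u : ℓ₁ u = ℓ s := by simp [hℓ₁]
    have hℓ₁s : ℓ₁ s = ⊥ := by simp [hℓ₁, hsu]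
    have hℓ₁_of_ne : ∀ x, x ≠ s → x ≠ u → ℓ₁ x = ℓ x := fun x hxs hxu ↦ by simp [hℓ₁, hxs, hxu]
    have hlt : ℓ₁ < ℓ := by
      refine Pi.lt_def.2 ⟨?_, s, hℓ₁s ▸ hs.bot_lt⟩
      exact update_le_iff.2 ⟨htop ▸ le_top, fun x _ ↦ update_le_self_iff.2 bot_le x⟩
    obtain ⟨t, p, ℓ', hp, hℓ'_mem, hℓ'_notMem, hℓ'⟩ := ih ℓ₁ hlt (hℓ₁u ▸ hs) hu
    have hsp : s ∉ p.support := fun hsp ↦ hp.ne_bot hsp hℓ₁s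
    refine ⟨t, p.cons hadj, ℓ', hp.cons hadj hℓ₁s hℓ₁u htop hℓ₁_of_ne, ?_, fun x hx ↦ ?_, hℓ'⟩
    · simpa using ⟨(hℓ'_notMem s hsp).trans hℓ₁s, hℓ'_mem⟩
    · obtain ⟨hxs, hxp⟩ := not_or.1 (List.mem_cons.not.1 hx)
      have hxu : x ≠ u := fun h ↦ hxp (h ▸ p.start_mem_support)
      exact (hℓ'_notMem x hxp).trans (hℓ₁_of_ne x hxs hxu)

theorem linkable_of_isNondegenerateOn (hX : X ∈ edgeWeights K G) (h : IsNondegenerateOn X ℓ) :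
    Linkable G ℓ := by
  induction ℓ using WellFoundedLT.induction with | ind ℓ ih
  by_cases hℓ : ∃ s, IsAtom (ℓ s)
  · obtain ⟨s, hs⟩ := hℓ
    obtain ⟨t, p, ℓ', hp, hℓ'_mem, hℓ'_notMem, hℓ'⟩ :=
      exists_isLinkingPath_of_isNondegenerateOn hX hs h
    refine .of_isLinkingPath hp hℓ'_mem hℓ'_notMem (ih ℓ' (Pi.lt_def.2 ⟨fun x ↦ ?_, s, ?_⟩) hℓ')
    · by_cases hx : x ∈ p.support
      · exact hℓ'_mem x hx ▸ bot_le
      · exact (hℓ'_notMem x hx).le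
    · exact hℓ'_mem s p.start_mem_support ▸ hs.bot_lt
  · exact ⟨0, Fin.elim0, Fin.elim0, fun i ↦ i.elim0, fun i ↦ i.elim0, fun i ↦ i.elim0,
      fun x hx ↦ absurd ⟨x, hx⟩ hℓ⟩

/-- Along a path the row at each vertex `x ≠ v` passes membership in `N` on to the next vertex. -/
lemma forall_mem_support_of_forall_row_mem {M : Type*} [AddCommGroup M] [Module K M]
    {N : Submodule K M} {y : V → M} {u v : V} {p : G.Walk u v} (hp : p.IsPath) (hu : y u ∈ N)
    (hrow : ∀ x ∈ p.support, x ≠ v → ∑ w, X x w • y w ∈ N)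
    (hedge : ∀ x w, s(x, w) ∈ p.edges → X x w ≠ 0)
    (hsupp : ∀ x ∈ p.support, ∀ w, X x w ≠ 0 → y w ∈ N ∨ w = x ∨ s(x, w) ∈ p.edges) :
    ∀ x ∈ p.support, y x ∈ N := by
  classical
  induction p with
  | nil => simpa using hu
  | @cons u u' v huu' q ih =>
    obtain ⟨hq, huq⟩ := (SimpleGraph.Walk.cons_isPath_iff _ _).1 hp
    have hnext : ∀ w, s(u, w) ∈ (q.cons huu').edges → w = u' := fun w hw ↦ by
      rcases List.mem_cons.1 hw with hw | hw
      · exact Sym2.congr_right.1 hw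
      · exact absurd (q.fst_mem_support_of_mem_edges hw) huq
    have hrest : ∑ w ∈ Finset.univ.erase u', X u w • y w ∈ N := N.sum_mem fun w hw ↦ by
      by_cases hXuw : X u w = 0
      · simp [hXuw]
      rcases hsupp u (by simp) w hXuw with hwN | rfl | hw'
      · exact N.smul_mem _ hwN
      · exact N.smul_mem _ hu
      · exact absurd (hnext w hw') (Finset.ne_of_mem_erase hw)
    have hu' : y u' ∈ N := by
      have hsum := hrow u (by simp) fun h ↦ huq (h ▸ q.end_mem_support)
      rw [← Finset.add_sum_erase _ _ (Finset.mem_univ u'), N.add_mem_iff_left hrest] at hsum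
      exact (N.smul_mem_iff (hedge u u' (by simp))).1 hsum
    refine List.forall_mem_cons.2 ⟨hu, ih hq hu' (fun x hx ↦ hrow x (.tail _ hx))
      (fun x w hxw ↦ hedge x w (.tail _ hxw)) fun x hx w hxw ↦ ?_⟩
    rcases hsupp x (.tail _ hx) w hxw with hwN | hwx | hw
    · exact .inl hwN
    · exact .inr (.inl hwx)
    rcases List.mem_cons.1 hw with hw | hw
    · rcases Sym2.eq_iff.1 hw with ⟨rfl, -⟩ | ⟨-, rfl⟩
      · exact absurd hx huq
      · exact .inl hu
    · exact .inr (.inr hw)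

lemma IsLinkingPath.forall_mem_start {s t : V} {p : G.Walk s t} (hp : IsLinkingPath ℓ p)
    {y : V → K × K} (hy : ∀ v, y v ∈ ℓ v)
    (horth : ∀ v, ∀ a ∈ ℓ v, detForm K a (∑ u, X v u • y u) = 0)
    (hedge : ∀ x w, s(x, w) ∈ p.edges → X x w ≠ 0)
    (hsupp : ∀ x ∈ p.support, ∀ w, X x w ≠ 0 → w = x ∨ s(x, w) ∈ p.edges) :
    ∀ x ∈ p.support, y x ∈ ℓ s := by
  refine forall_mem_support_of_forall_row_mem hp.isPath (hy s) (fun x hx hxt ↦ ?_) hedge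
    fun x hx w hxw ↦ .inr (hsupp x hx w hxw)
  rcases hp.eq_top x hx with rfl | rfl | htop
  · exact mem_of_forall_detForm_eq_zero hp.isAtom_start (horth x)
  · exact absurd rfl hxt
  · rw [eq_zero_of_forall_detForm_eq_zero fun a ↦ horth x a (htop ▸ Submodule.mem_top)]
    exact zero_mem _

lemma IsLinkingPath.forall_eq_zero {s t : V} {p : G.Walk s t} (hp : IsLinkingPath ℓ p)
    {y : V → K × K} (hy : ∀ v, y v ∈ ℓ v)
    (horth : ∀ v, ∀ a ∈ ℓ v, detForm K a (∑ u, X v u • y u) = 0)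
    (hedge : ∀ x w, s(x, w) ∈ p.edges → X x w ≠ 0)
    (hsupp : ∀ x ∈ p.support, ∀ w, X x w ≠ 0 → w = x ∨ s(x, w) ∈ p.edges) :
    ∀ x ∈ p.support, y x = 0 := fun x hx ↦
  Submodule.disjoint_def.1 (hp.isAtom_start.disjoint_of_ne hp.isAtom_end hp.ne) _
    (hp.forall_mem_start hy horth hedge hsupp x hx)
    (hp.reverse.forall_mem_start hy horth (by simpa using hedge) (by simpa using hsupp) x
      (by simpa using hx))

/-- The witness is the identity plus the adjacency matrix of the union of the linking paths. -/
theorem exists_isNondegenerateOn_of_linkable (h : Linkable G ℓ) :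
    ∃ X ∈ edgeWeights K G, IsNondegenerateOn X ℓ := by
  classical
  obtain ⟨n, a, b, p, hp, hdisj, hcover⟩ := h
  let H := SimpleGraph.fromEdgeSet {e | ∃ i, e ∈ (p i).edges}
  have hH : ∀ v u, H.Adj v u ↔ ∃ i, s(v, u) ∈ (p i).edges := fun v u ↦
    (SimpleGraph.fromEdgeSet_adj _).trans
      (and_iff_left_of_imp fun ⟨i, hi⟩ ↦ ((p i).adj_of_mem_edges hi).ne)
  have hX : 1 + H.adjMatrix K ∈ edgeWeights K G := one_add_adjMatrix_mem_edgeWeights fun v u h ↦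
    ((hH v u).1 h).elim fun i ↦ (p i).adj_of_mem_edges
  refine ⟨_, hX, isNondegenerateOn_of_forall_eq_zero hX.1 fun y hy horth ↦ funext fun v ↦ ?_⟩
  have hH_support : ∀ v u, H.Adj v u → ∀ i, v ∈ (p i).support → s(v, u) ∈ (p i).edges := by
    intro v u hvu i hv
    obtain ⟨j, hj⟩ := (hH v u).1 hvu
    obtain rfl : i = j := by
      by_contra hij
      exact hdisj i j hij v hv ((p j).fst_mem_support_of_mem_edges hj)
    exact hj
  by_cases hv : ∃ i, v ∈ (p i).support
  · obtain ⟨i, hi⟩ := hv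
    refine (hp i).forall_eq_zero hy horth (fun x w hxw ↦ ?_)
      (fun x hx w hxw ↦ ?_) v hi
    · exact one_add_adjMatrix_ne_zero_iff.2 (.inr ((hH x w).2 ⟨i, hxw⟩))
    · exact (one_add_adjMatrix_ne_zero_iff.1 hxw).imp .symm fun h ↦ hH_support x w h i hx
  · have hrow : ∑ u, (1 + H.adjMatrix K) v u • y u = y v := by
      have hHv : ∀ u, ¬ H.Adj v u := fun u h ↦ hv <|
        ((hH v u).1 h).imp fun i ↦ (p i).fst_mem_support_of_mem_edges
      simp [hHv, Matrix.one_apply]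
    have hℓv : ¬ IsAtom (ℓ v) := fun hatom ↦ by
      obtain ⟨i, rfl | rfl⟩ := hcover v hatom
      · exact hv ⟨i, (p i).start_mem_support⟩
      · exact hv ⟨i, (p i).end_mem_support⟩
    exact eq_zero_of_mem_of_forall_detForm_eq_zero hℓv (hy v) (hrow ▸ horth v)

theorem exists_forall_isNondegenerateOn_iff_linkable [Infinite K] {J : Type*} [Finite J]
    (G : SimpleGraph V) (ℓ : J → V → Submodule K (K × K)) :
    ∃ X ∈ edgeWeights K G, ∀ j, IsNondegenerateOn X (ℓ j) ↔ Linkable G (ℓ j) := by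
  have := Fintype.ofFinite {j // Linkable G (ℓ j)}
  choose Y hY hYℓ using fun j : {j // Linkable G (ℓ j)} ↦ exists_isNondegenerateOn_of_linkable j.2
  obtain ⟨x, hx⟩ := exists_forall_nondegenerate_restrict_sum hYℓ
  have hX : ∑ j, x j • Y j ∈ edgeWeights K G :=
    Submodule.sum_mem _ fun j _ ↦ Submodule.smul_mem _ _ (hY j)
  refine ⟨_, hX, fun j ↦ ⟨linkable_of_isNondegenerateOn hX, fun hj ↦ ?_⟩⟩
  simpa [IsNondegenerateOn] using hx ⟨j, hj⟩

end Linking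

section Terminals

lemma maderMatchable_empty {V : Type*} (G : SimpleGraph V) (T : Finset V) (σ : V → ℕ) :
    MaderMatchable G T σ ∅ :=
  ⟨0, Fin.elim0, Fin.elim0, fun i ↦ i.elim0, fun i ↦ i.elim0, fun i ↦ i.elim0, by simp⟩

variable {V K : Type*} [DecidableEq V] [Field K] {c : V → K} {T S : Finset V}

/-- The subspaces expressing that exactly the terminals in `S ⊆ T` are in use: these carry the lines
spanned by `(1, c v)`, which tell the blocks apart if `c` labels the blocks. -/
def terminalSpaces (c : V → K) (T S : Finset V) (v : V) : Submodule K (K × K) :=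
  if v ∈ S then K ∙ (1, c v) else if v ∈ T then ⊥ else ⊤

lemma isAtom_terminalSpaces_iff {v : V} : IsAtom (terminalSpaces c T S v) ↔ v ∈ S := by
  unfold terminalSpaces
  split_ifs with hS hT
  · simpa [hS] using nonzero_span_atom ((1, c v) : K × K) (by simp)
  · simp [hS, IsAtom]
  · simp [hS, not_isAtom_top]

lemma span_one_prod_eq_iff {a b : K} : K ∙ ((1, a) : K × K) = K ∙ (1, b) ↔ a = b := by
  refine ⟨fun h ↦ ?_, fun h ↦ h ▸ rfl⟩
  obtain ⟨r, hr⟩ := Submodule.mem_span_singleton.1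
    (h ▸ Submodule.mem_span_singleton_self ((1, a) : K × K))
  obtain ⟨rfl, rfl⟩ : r = 1 ∧ r * b = a := by simpa using hr
  exact one_mul b

lemma isLinkingPath_terminalSpaces_iff {G : SimpleGraph V} {σ : V → ℕ}
    (hc : ∀ u v, c u = c v ↔ σ u = σ v) (hST : S ⊆ T) {s t : V} {p : G.Walk s t} :
    IsLinkingPath (terminalSpaces c T S) p ↔ IsMaderPath G T σ p ∧ s ∈ S ∧ t ∈ S := by
  have hne : s ∈ S → t ∈ S →
      (terminalSpaces c T S s ≠ terminalSpaces c T S t ↔ σ s ≠ σ t) := fun hs ht ↦ by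
    rw [terminalSpaces, terminalSpaces, if_pos hs, if_pos ht, Ne, span_one_prod_eq_iff, hc]
  constructor
  · rintro ⟨hp, hs, ht, hst, htop⟩
    rw [isAtom_terminalSpaces_iff] at hs ht
    refine ⟨⟨hp, hST hs, hST ht, (hne hs ht).1 hst, fun x hx hxT ↦ ?_⟩, hs, ht⟩
    refine (or_assoc.2 (htop x hx)).resolve_right fun hx_top ↦ ?_
    by_cases hxS : x ∈ S
    · exact not_isAtom_top (hx_top ▸ isAtom_terminalSpaces_iff.2 hxS)
    · simp [terminalSpaces, hxS, hxT] at hx_top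
  · rintro ⟨⟨hp, -, -, hst, hinner⟩, hs, ht⟩
    refine ⟨hp, isAtom_terminalSpaces_iff.2 hs, isAtom_terminalSpaces_iff.2 ht, (hne hs ht).2 hst,
      fun x hx ↦ ?_⟩
    by_cases hxT : x ∈ T
    · exact (hinner x hx hxT).imp_right .inl
    · exact .inr (.inr ((if_neg fun hxS ↦ hxT (hST hxS)).trans (if_neg hxT)))

lemma linkable_terminalSpaces_iff {G : SimpleGraph V} {σ : V → ℕ}
    (hc : ∀ u v, c u = c v ↔ σ u = σ v) (hST : S ⊆ T) :
    Linkable G (terminalSpaces c T S) ↔ MaderMatchable G T σ S := by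
  constructor
  · rintro ⟨n, a, b, p, hp, hdisj, hcover⟩
    simp only [isLinkingPath_terminalSpaces_iff hc hST, isAtom_terminalSpaces_iff] at hp hcover
    refine ⟨n, a, b, p, fun i ↦ (hp i).1, hdisj, fun x ↦ ⟨hcover x, ?_⟩⟩
    rintro ⟨i, rfl | rfl⟩
    · exact (hp i).2.1
    · exact (hp i).2.2
  · rintro ⟨n, a, b, p, hp, hdisj, hS⟩
    refine ⟨n, a, b, p, fun i ↦ (isLinkingPath_terminalSpaces_iff hc hST).2 ⟨hp i, ?_, ?_⟩, hdisj,
      fun x hx ↦ (hS x).1 (isAtom_terminalSpaces_iff.1 hx)⟩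
    · exact (hS _).2 ⟨i, .inl rfl⟩
    · exact (hS _).2 ⟨i, .inr rfl⟩

lemma exists_forall_isNondegenerateOn_iff_maderMatchable [Fintype V] (K : Type*) [Field K]
    [Infinite K] (G : SimpleGraph V) (T : Finset V) (σ : V → ℕ) :
    ∃ (c : V → K) (X : Matrix V V K), X.IsSymm ∧ ∀ S ⊆ T,
      (IsNondegenerateOn X (terminalSpaces c T S) ↔ MaderMatchable G T σ S) := by
  let c : V → K := fun v ↦ Infinite.natEmbedding K (σ v)
  have hc : ∀ u v, c u = c v ↔ σ u = σ v := fun u v ↦ (Infinite.natEmbedding K).injective.eq_iff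
  obtain ⟨X, hX, hX_iff⟩ := exists_forall_isNondegenerateOn_iff_linkable G (terminalSpaces c T)
  exact ⟨c, X, hX.1, fun S hST ↦ (hX_iff S).trans (linkable_terminalSpaces_iff hc hST)⟩

lemma pi_terminalSpaces_eq_sup_span [Finite V] (hST : S ⊆ T) :
    Submodule.pi Set.univ (terminalSpaces c T S) =
      Submodule.pi Set.univ (terminalSpaces c T ∅) ⊔
        Submodule.span K ((fun v ↦ Pi.single v (1, c v)) '' (S : Set V)) := by
  apply le_antisymm
  · rw [← Submodule.iSup_map_single]
    refine iSup_le fun v ↦ ?_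
    by_cases hv : v ∈ S
    · rw [terminalSpaces, if_pos hv, Submodule.map_span, Set.image_singleton]
      exact le_sup_of_le_right (Submodule.span_mono (Set.singleton_subset_iff.2 ⟨v, hv, rfl⟩))
    · have hv_eq : terminalSpaces c T S v = terminalSpaces c T ∅ v := by simp [terminalSpaces, hv]
      rw [hv_eq]
      exact le_sup_of_le_left (Submodule.map_le_iff_le_comap.2 (Submodule.le_comap_single_pi _))
  · refine sup_le (Submodule.pi_mono fun v _ ↦ ?_) (Submodule.span_le.2 ?_)
    · by_cases hv : v ∈ T
      · simp [terminalSpaces, hv]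
      · have hvS : v ∉ S := fun h ↦ hv (hST h)
        simp [terminalSpaces, hv, hvS]
    · rintro _ ⟨v, hv, rfl⟩
      refine Submodule.le_comap_single_pi (terminalSpaces c T S) ?_
      rw [terminalSpaces, if_pos (Finset.mem_coe.1 hv)]
      exact Submodule.mem_span_singleton_self _

lemma linearIndependent_mkQ_single (c : V → K) (T : Finset V) :
    LinearIndependent K ((Submodule.pi Set.univ (terminalSpaces c T ∅)).mkQ ∘
      fun t : T ↦ Pi.single (t : V) ((1, c t) : K × K)) := by
  rw [Fintype.linearIndependent_iff]
  intro g hg t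
  have hmem : ∑ t : T, g t • Pi.single (t : V) ((1, c t) : K × K) ∈
      Submodule.pi Set.univ (terminalSpaces c T ∅) := by
    rw [← Submodule.Quotient.mk_eq_zero, ← Submodule.mkQ_apply, map_sum]
    simpa using hg
  have ht : g t • ((1, c t) : K × K) = 0 := by
    simpa [terminalSpaces, Pi.single_apply, Finset.sum_apply] using hmem t trivial
  exact (smul_eq_zero_iff_left (by simp)).1 ht

end Terminals

end Mader

open Mader in
theorem stmt_11_general {V : Type*} [Finite V] [DecidableEq V] (K : Type*) [Field K] [Infinite K]
    (G : SimpleGraph V) (T : Finset V) (σ : V → ℕ) :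
    ∃ A : Matrix ↥T ↥T K, (∀ u v : ↥T, A u v = - A v u) ∧ (∀ v : ↥T, A v v = 0) ∧
      ∀ S : Finset ↥T,
        (A.submatrix (fun x : ↥S => (x : ↥T)) (fun x : ↥S => (x : ↥T))).det ≠ 0 ↔
          MaderMatchable G T σ (S.image Subtype.val) := by
  have := Fintype.ofFinite V
  obtain ⟨c, X, hX, hX_iff⟩ := exists_forall_isNondegenerateOn_iff_maderMatchable K G T σ
  have hU : IsNondegenerateOn X (terminalSpaces c T ∅) :=
    (hX_iff ∅ T.empty_subset).2 (maderMatchable_empty G T σ)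
  obtain ⟨A, hA_skew, hA_diag, hA⟩ := exists_skew_matrix_det_submatrix_ne_zero_iff
    (weightedDetForm_isAlt hX) hU (linearIndependent_mkQ_single c T)
  refine ⟨A, hA_skew, hA_diag, fun S ↦ ?_⟩
  have hST : S.image Subtype.val ⊆ T := Finset.image_subset_iff.2 fun t _ ↦ t.2
  rw [hA, ← hX_iff _ hST, IsNondegenerateOn, pi_terminalSpaces_eq_sup_span hST, Finset.coe_image,
    Set.image_image]

/-- Direct linear representation of the Mader delta-matroid.
For a graph `G`, terminals `T`, and a partition of `T` (given by the block-labelling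
`σ`), there exist a field `F` and a skew-symmetric matrix `A` indexed by `T` such
that for every `S ⊆ T`, the principal submatrix `A[S]` is nonsingular iff `S` is
Mader matchable in `(G, 𝒯)`. -/
theorem stmt_11 {V : Type*} [Fintype V] [DecidableEq V]
    (G : SimpleGraph V) (T : Finset V) (σ : V → ℕ) :
    ∃ (F : Type) (_ : Field F) (A : Matrix ↥T ↥T F),
      (∀ u v : ↥T, A u v = - A v u) ∧ (∀ v : ↥T, A v v = 0) ∧
      ∀ S : Finset ↥T,
        (A.submatrix (fun x : ↥S => (x : ↥T)) (fun x : ↥S => (x : ↥T))).det ≠ 0 ↔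
          MaderMatchable G T σ (S.image Subtype.val) :=
  ⟨ℚ, inferInstance, stmt_11_general ℚ G T σ⟩
end

section
/- Let G be a finite simple graph, T ⊆ V(G), and 𝒯 a partition of T, and let ν = ν(G,𝒯) be the Mader path-packing number of (G,𝒯). Then there exists a set X ⊆ V(G) (possibly intersecting T) with |X| ≤ 2ν such that every 𝒯-path in G contains a vertex of X; equivalently, X is a vertex multiway cut for 𝒯: no connected component of G − X contains terminals from two distinct blocks of 𝒯. -/
/-- `(G, 𝒯)` has a Mader path packing consisting of `n` paths. -/
def HasMaderPacking {V : Type*} (G : SimpleGraph V) (T : Finset V) (σ : V → ℕ)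
    (n : ℕ) : Prop :=
  ∃ (a b : Fin n → V) (p : ∀ i, G.Walk (a i) (b i)),
    (∀ i, IsMaderPath G T σ (p i)) ∧
    (∀ i j, i ≠ j → ∀ x, x ∈ (p i).support → x ∉ (p j).support)

/-- `ν` is the Mader path-packing number of `(G, 𝒯)`. -/
def MaderNu {V : Type*} (G : SimpleGraph V) (T : Finset V) (σ : V → ℕ) (ν : ℕ) : Prop :=
  HasMaderPacking G T σ ν ∧ ∀ m, HasMaderPacking G T σ m → m ≤ ν

/-!
If every multiway cut has more than `2 * k` vertices, there are `k + 1` disjoint Mader paths. The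
proof goes by induction, on the graph and then on the partition, which is refined by splitting a
block or by adding a terminal; neither operation makes the minimum multiway cut smaller. Edges
within a block can be deleted, so let there be none.

If some block has two elements, split one of them, `s`, off. Unless the `k + 1` paths obtained by
induction are already a packing, one of them joins `s` to another terminal of its old block, hence
passes through a nonterminal `u`. Add `u` to that block and choose `k + 1` disjoint paths with as
few edges as possible outside the first family. Unless they are a packing, one of them ends at `u`,
so they cover one terminal fewer than the first family, which thus covers some further terminal `r`.
Rerouting the second family along the path of the first family at `r` contradicts minimality or
yields the packing.

If all blocks are singletons, delete the ends `s` and `t` of some Mader path. This lowers the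
minimum multiway cut by at most two, so `k` disjoint paths remain by induction. A further path,
starting at `s`, is pushed along the Mader path, one vertex `u` at a time, by the same comparison
with the packing obtained from adding `u` as a terminal, until it reaches `t`.
-/

open SimpleGraph

section Packings

variable {V ι : Type*} {G H : SimpleGraph V} {T : Finset V} {σ : V → ℕ}
  {a b r s t u v w x y z : V} {c k K : ℕ}

/-! ### Walks -/

theorem isPath_append {p : G.Walk u v} {q : G.Walk v w} (hp : p.IsPath) (hq : q.IsPath)
    (h : ∀ x ∈ p.support, x ∈ q.support → x = v) : (p.append q).IsPath := by
  have hq' := hq.support_nodup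
  rw [← Walk.cons_tail_support, List.nodup_cons] at hq'
  refine .mk' ?_
  rw [Walk.support_append, List.nodup_append']
  refine ⟨hp.support_nodup, hq'.2, fun x hxp hxq => ?_⟩
  obtain rfl := h x hxp (List.mem_of_mem_tail hxq)
  exact hq'.1 hxq

theorem eq_of_mem_support_of_isPath_append {p : G.Walk u v} {q : G.Walk v w}
    (h : (p.append q).IsPath) (hp : x ∈ p.support) (hq : x ∈ q.support) : x = v := by
  by_contra hxv
  exact h.ne_of_mem_support_of_append hxv hp hq rfl

theorem eq_of_isPath_of_edges_subset {p q : G.Walk u v} (hp : p.IsPath) (hq : q.IsPath)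
    (h : q.edges ⊆ p.edges) : q = p := by
  induction p with
  | nil => exact (Walk.isPath_iff_nil.1 hq).eq_nil
  | @cons u v' v hadj p ih =>
    rw [Walk.cons_isPath_iff] at hp
    cases q with
    | nil => exact absurd p.end_mem_support hp.2
    | @cons _ v'' _ hadj' q =>
      rw [Walk.cons_isPath_iff] at hq
      rw [Walk.edges_cons, Walk.edges_cons, List.cons_subset] at h
      obtain rfl : v'' = v' := by
        rcases List.mem_cons.1 h.1 with heq | hmem
        · exact Sym2.congr_right.1 heq
        · exact absurd (p.fst_mem_support_of_mem_edges hmem) hp.2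
      rw [ih hp.1 hq.1 fun e he => (List.mem_cons.1 (h.2 he)).resolve_left ?_]
      rintro rfl
      exact hq.2 (q.fst_mem_support_of_mem_edges he)

theorem exists_append_forall_mem_imp_eq (p : G.Walk u v) (S : Set V)
    (h : ∃ x ∈ p.support, x ∈ S) :
    ∃ w ∈ S, ∃ (p₁ : G.Walk u w) (p₂ : G.Walk w v),
      p = p₁.append p₂ ∧ ∀ x ∈ p₁.support, x ∈ S → x = w := by
  classical
  obtain ⟨w, hwS, hw, hfirst⟩ :=
    p.exists_mem_support_forall_mem_support_imp_eq {x ∈ p.support.toFinset | x ∈ S} <| by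
      obtain ⟨x, hx, hxS⟩ := h
      exact ⟨x, by simp [hx, hxS]⟩
  refine ⟨w, (Finset.mem_filter.1 hwS).2, _, _, (p.take_spec hw).symm, fun x hx hxS => ?_⟩
  refine hfirst x (Finset.mem_filter.2 ⟨?_, hxS⟩) hx
  exact List.mem_toFinset.2 (p.support_takeUntil_subset_support hw hx)

/-- The walk `q` runs along `p`, in the same or in the opposite direction. Only the supports and
edge lists up to order are recorded, so the endpoints of `q` and `p` need not match in the types. -/
def IsRetracing (q : G.Walk a b) (p : G.Walk u v) : Prop :=
  q.support.Perm p.support ∧ q.edges.Perm p.edges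

namespace IsRetracing

theorem refl (p : G.Walk u v) : IsRetracing p p := ⟨.refl _, .refl _⟩

theorem reverse {q : G.Walk a b} {p : G.Walk u v} (h : IsRetracing q p) :
    IsRetracing q.reverse p := by
  constructor
  · rw [Walk.support_reverse]
    exact (List.reverse_perm _).trans h.1
  · rw [Walk.edges_reverse]
    exact (List.reverse_perm _).trans h.2

theorem mem_support {q : G.Walk a b} {p : G.Walk u v} (h : IsRetracing q p) :
    x ∈ q.support ↔ x ∈ p.support := h.1.mem_iff

theorem mem_edges {q : G.Walk a b} {p : G.Walk u v} (h : IsRetracing q p) {e : Sym2 V} :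
    e ∈ q.edges ↔ e ∈ p.edges := h.2.mem_iff

end IsRetracing

/-! ### Mader paths -/

theorem isMaderPath_congr {T' : Finset V} {σ' : V → ℕ} {p : G.Walk a b}
    (hT : ∀ x ∈ p.support, x ∈ T ↔ x ∈ T') (hσ : ∀ x ∈ p.support, σ x = σ' x) :
    IsMaderPath G T σ p ↔ IsMaderPath G T' σ' p := by
  unfold IsMaderPath
  rw [hT a p.start_mem_support, hT b p.end_mem_support, hσ a p.start_mem_support,
    hσ b p.end_mem_support]
  have hint : (∀ x ∈ p.support, x ∈ T → x = a ∨ x = b) ↔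
      ∀ x ∈ p.support, x ∈ T' → x = a ∨ x = b :=
    forall₂_congr fun x hx => by rw [hT x hx]
  rw [hint]

theorem isMaderPath_update_iff [DecidableEq V] {p : G.Walk a b} (hs : s ∉ p.support) :
    IsMaderPath G T (Function.update σ s c) p ↔ IsMaderPath G T σ p :=
  isMaderPath_congr (fun _ _ => .rfl) fun _ hx =>
    Function.update_of_ne (ne_of_mem_of_not_mem hx hs) _ _

theorem isMaderPath_insert_update_iff [DecidableEq V] {p : G.Walk a b} (hu : u ∉ p.support) :
    IsMaderPath G (insert u T) (Function.update σ u c) p ↔ IsMaderPath G T σ p := by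
  rw [isMaderPath_update_iff hu]
  refine isMaderPath_congr (fun x hx => ?_) fun _ _ => rfl
  rw [Finset.mem_insert, or_iff_right (ne_of_mem_of_not_mem hx hu)]

theorem update_label_ne [DecidableEq V] (hc : ∀ x ∈ T, σ x ≠ c) (ha : a ∈ T) (hb : b ∈ T)
    (hσ : σ a ≠ σ b) : Function.update σ s c a ≠ Function.update σ s c b := by
  rcases eq_or_ne a s with has | has <;> rcases eq_or_ne b s with hbs | hbs
  · exact absurd (congrArg σ (has.trans hbs.symm)) hσ
  · rw [has, Function.update_self, Function.update_of_ne hbs]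
    exact (hc b hb).symm
  · rw [hbs, Function.update_self, Function.update_of_ne has]
    exact hc a ha
  · rwa [Function.update_of_ne has, Function.update_of_ne hbs]

theorem isMaderPath_append {p : G.Walk u v} {q : G.Walk v w} (hp : p.IsPath) (hq : q.IsPath)
    (hpq : ∀ x ∈ p.support, x ∈ q.support → x = v) (hu : u ∈ T) (hw : w ∈ T) (hσ : σ u ≠ σ w)
    (hpT : ∀ x ∈ p.support, x ∈ T → x = u ∨ x = w)
    (hqT : ∀ x ∈ q.support, x ∈ T → x = u ∨ x = w) : IsMaderPath G T σ (p.append q) := by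
  refine ⟨isPath_append hp hq hpq, hu, hw, hσ, fun x hx => ?_⟩
  exact ((p.mem_support_append_iff q).1 hx).elim (hpT x) (hqT x)

namespace IsMaderPath

variable {p : G.Walk a b}

theorem ne (h : IsMaderPath G T σ p) : a ≠ b :=
  ne_of_apply_ne σ h.2.2.2.1

theorem reverse (h : IsMaderPath G T σ p) : IsMaderPath G T σ p.reverse := by
  obtain ⟨hp, ha, hb, hσ, hint⟩ := h
  exact ⟨hp.reverse, hb, ha, hσ.symm, fun x hx hxT => (hint x (by simpa using hx) hxT).symm⟩

theorem transfer (h : IsMaderPath G T σ p) (hH : ∀ e ∈ p.edges, e ∈ H.edgeSet) :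
    IsMaderPath H T σ (p.transfer H hH) :=
  ⟨h.1.transfer hH, h.2.1, h.2.2.1, h.2.2.2.1, by simpa using h.2.2.2.2⟩

theorem label_ne_of_mem (h : IsMaderPath G T σ p) (hx : x ∈ p.support) (hxT : x ∈ T)
    (hy : y ∈ p.support) (hyT : y ∈ T) (hxy : x ≠ y) : σ x ≠ σ y := by
  obtain ⟨-, -, -, hσ, hint⟩ := h
  rcases hint x hx hxT with rfl | rfl <;> rcases hint y hy hyT with rfl | rfl
  · exact absurd rfl hxy
  · exact hσ
  · exact hσ.symm
  · exact absurd rfl hxy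

theorem exists_isRetracing (h : IsMaderPath G T σ p) (hrT : r ∈ T) (hr : r ∈ p.support) :
    ∃ (z : V) (q : G.Walk r z), IsMaderPath G T σ q ∧ IsRetracing q p := by
  rcases h.2.2.2.2 r hr hrT with rfl | rfl
  · exact ⟨_, p, h, .refl p⟩
  · exact ⟨_, p.reverse, h.reverse, (IsRetracing.refl p).reverse⟩

theorem exists_isRetracing_label_ne (h : IsMaderPath G T σ p) (c : ℕ) :
    ∃ (s t : V) (q : G.Walk s t), IsMaderPath G T σ q ∧ IsRetracing q p ∧ σ s ≠ c := by
  by_cases ha : σ a = c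
  · exact ⟨b, a, p.reverse, h.reverse, (IsRetracing.refl p).reverse, ha ▸ h.2.2.2.1.symm⟩
  · exact ⟨a, b, p, h, .refl p, ha⟩

theorem insert_takeUntil [DecidableEq V] (h : IsMaderPath G T σ p) (huT : u ∉ T)
    (hu : u ∈ p.support) (ha : σ a ≠ c) :
    IsMaderPath G (insert u T) (Function.update σ u c) (p.takeUntil u hu) := by
  refine ⟨h.1.takeUntil hu, Finset.mem_insert_of_mem h.2.1, Finset.mem_insert_self u T, ?_, ?_⟩
  · rwa [Function.update_self, Function.update_of_ne (ne_of_mem_of_not_mem h.2.1 huT)]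
  · intro x hx hxT
    rcases Finset.mem_insert.1 hxT with rfl | hxT
    · exact .inr rfl
    refine (h.2.2.2.2 x (p.support_takeUntil_subset_support hu hx) hxT).imp_right ?_
    rintro rfl
    exact absurd hx (Walk.endpoint_notMem_support_takeUntil h.1 hu (ne_of_mem_of_not_mem hxT huT))

theorem card_filter_mem_support [DecidableEq V] (h : IsMaderPath G T σ p) :
    (T.filter (· ∈ p.support)).card = 2 := by
  rw [← Finset.card_pair h.ne]
  congr 1
  ext x
  simp only [Finset.mem_filter, Finset.mem_insert, Finset.mem_singleton]
  refine ⟨fun hx => h.2.2.2.2 x hx.2 hx.1, ?_⟩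
  rintro (rfl | rfl)
  · exact ⟨h.2.1, p.start_mem_support⟩
  · exact ⟨h.2.2.1, p.end_mem_support⟩

end IsMaderPath

/-! ### Families of walks -/

/-- A walk of `G` bundled with its endpoints, so that walks with different ends can be collected
in one family. -/
structure BundledWalk (G : SimpleGraph V) where
  {source target : V}
  walk : G.Walk source target

/-- The walks of the family `Q` are pairwise vertex-disjoint. -/
def IsDisjointFamily (Q : ι → BundledWalk G) : Prop :=
  Pairwise fun i j => (Q i).walk.support.Disjoint (Q j).walk.support

/-- The vertices covered by the family `Q`. -/
def coveredSet (Q : ι → BundledWalk G) : Set V := {x | ∃ i, x ∈ (Q i).walk.support}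

/-- The edges used by the family `Q`. -/
def edgeUnion (Q : ι → BundledWalk G) : Set (Sym2 V) := {e | ∃ i, e ∈ (Q i).walk.edges}

/-- The terminals covered by the family `Q`. -/
def coveredTerminals [Fintype ι] [DecidableEq V] (T : Finset V) (Q : ι → BundledWalk G) :
    Finset V :=
  Finset.univ.biUnion fun i => T.filter (· ∈ (Q i).walk.support)

/-- `Q` is a Mader path packing, as a predicate on families of bundled walks. -/
def IsMaderPacking (G : SimpleGraph V) (T : Finset V) (σ : V → ℕ) (Q : ι → BundledWalk G) : Prop :=
  (∀ i, IsMaderPath G T σ (Q i).walk) ∧ IsDisjointFamily Q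

theorem hasMaderPacking_iff :
    HasMaderPacking G T σ K ↔ ∃ Q : Fin K → BundledWalk G, IsMaderPacking G T σ Q := by
  constructor
  · rintro ⟨a, b, p, hp, hd⟩
    exact ⟨fun i => ⟨p i⟩, hp, fun i j hij x hx => hd i j hij x hx⟩
  · rintro ⟨Q, hQ, hd⟩
    exact ⟨_, _, fun i => (Q i).walk, hQ, fun i j hij x hx => @hd i j hij x hx⟩

theorem mem_coveredTerminals [Fintype ι] [DecidableEq V] {Q : ι → BundledWalk G} :
    x ∈ coveredTerminals T Q ↔ x ∈ T ∧ x ∈ coveredSet Q := by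
  simp [coveredTerminals, coveredSet]

theorem IsRetracing.coveredSet_update [DecidableEq ι] {Q : ι → BundledWalk G} {j : ι}
    {p : G.Walk a b} (h : IsRetracing p (Q j).walk) :
    coveredSet (Function.update Q j ⟨p⟩) = coveredSet Q := by
  ext x
  refine exists_congr fun i => ?_
  rcases eq_or_ne i j with rfl | hi
  · rw [Function.update_self]
    exact h.mem_support
  · rw [Function.update_of_ne hi]

namespace IsDisjointFamily

variable {Q : ι → BundledWalk G} {i j : ι}

theorem eq_of_mem (hQ : IsDisjointFamily Q) (hi : x ∈ (Q i).walk.support)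
    (hj : x ∈ (Q j).walk.support) : i = j :=
  by_contra fun hij => hQ hij hi hj

theorem update [DecidableEq ι] (hQ : IsDisjointFamily Q) {p : G.Walk a b}
    (hp : ∀ i ≠ j, p.support.Disjoint (Q i).walk.support) :
    IsDisjointFamily (Function.update Q j ⟨p⟩) := by
  intro i i' hii'
  rcases eq_or_ne i j with rfl | hi
  · rw [Function.update_self, Function.update_of_ne hii'.symm]
    exact hp i' hii'.symm
  rcases eq_or_ne i' j with rfl | hi'
  · rw [Function.update_self, Function.update_of_ne hi]
    exact (hp i hi).symm
  · rw [Function.update_of_ne hi, Function.update_of_ne hi']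
    exact hQ hii'

theorem isMaderPacking_update [DecidableEq ι] (hQ : IsDisjointFamily Q)
    (hQm : ∀ i ≠ j, IsMaderPath G T σ (Q i).walk) {p : G.Walk a b} (hpm : IsMaderPath G T σ p)
    (hp : ∀ i ≠ j, p.support.Disjoint (Q i).walk.support) :
    IsMaderPacking G T σ (Function.update Q j ⟨p⟩) := by
  refine ⟨fun i => ?_, hQ.update hp⟩
  rcases eq_or_ne i j with rfl | hi
  · rwa [Function.update_self]
  · rw [Function.update_of_ne hi]
    exact hQm i hi

theorem card_coveredTerminals [Fintype ι] [DecidableEq V] (hQ : IsDisjointFamily Q) :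
    (coveredTerminals T Q).card = ∑ i, (T.filter (· ∈ (Q i).walk.support)).card := by
  refine Finset.card_biUnion fun i _ j _ hij => Finset.disjoint_left.2 fun x hi hj => ?_
  exact hQ hij (Finset.mem_filter.1 hi).2 (Finset.mem_filter.1 hj).2

theorem subset_of_edges_subset (hQ : IsDisjointFamily Q) (q : G.Walk u v)
    (hu : u ∈ (Q i).walk.support) (hq : ∀ e ∈ q.edges, e ∈ edgeUnion Q) :
    q.support ⊆ (Q i).walk.support ∧ q.edges ⊆ (Q i).walk.edges := by
  induction q with
  | nil => simpa using hu
  | @cons u v _ hadj q ih =>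
    simp only [Walk.edges_cons, List.forall_mem_cons] at hq
    obtain ⟨⟨j, hj⟩, hq⟩ := hq
    obtain rfl := hQ.eq_of_mem hu ((Q j).walk.fst_mem_support_of_mem_edges hj)
    obtain ⟨hsupp, hedges⟩ := ih ((Q i).walk.snd_mem_support_of_mem_edges hj) hq
    rw [Walk.support_cons, Walk.edges_cons]
    exact ⟨List.cons_subset.2 ⟨hu, hsupp⟩, List.cons_subset.2 ⟨hj, hedges⟩⟩

end IsDisjointFamily

theorem IsMaderPacking.card_coveredTerminals [DecidableEq V] {Q : Fin K → BundledWalk G}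
    (hQ : IsMaderPacking G T σ Q) : (coveredTerminals T Q).card = 2 * K := by
  rw [hQ.2.card_coveredTerminals, Finset.sum_congr rfl fun i _ => (hQ.1 i).card_filter_mem_support]
  simp [mul_comm]

open Classical in
/-- The number of edges of `p` outside `E`. -/
noncomputable def outsideLength (E : Set (Sym2 V)) (p : G.Walk a b) : ℕ :=
  p.edges.countP (· ∉ E)

/-- The number of edges of the family `Q` outside `E`, the quantity minimized in the exchange
arguments. -/
noncomputable def outsideCost [Fintype ι] (E : Set (Sym2 V)) (Q : ι → BundledWalk G) : ℕ :=
  ∑ i, outsideLength E (Q i).walk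

variable {E : Set (Sym2 V)}

theorem outsideLength_append (p : G.Walk u v) (q : G.Walk v w) :
    outsideLength E (p.append q) = outsideLength E p + outsideLength E q := by
  simp only [outsideLength, Walk.edges_append, List.countP_append]

theorem outsideLength_reverse (p : G.Walk u v) :
    outsideLength E p.reverse = outsideLength E p := by
  simp only [outsideLength, Walk.edges_reverse, List.countP_reverse]

theorem outsideLength_eq_zero {p : G.Walk u v} :
    outsideLength E p = 0 ↔ ∀ e ∈ p.edges, e ∈ E := by
  simp [outsideLength, List.countP_eq_zero]

theorem IsRetracing.outsideLength_eq {q : G.Walk a b} {p : G.Walk u v} (h : IsRetracing q p) :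
    outsideLength E q = outsideLength E p :=
  h.2.countP_eq _

theorem outsideCost_update [Fintype ι] [DecidableEq ι] (Q : ι → BundledWalk G) (j : ι)
    (p : G.Walk a b) :
    outsideCost E (Function.update Q j ⟨p⟩) + outsideLength E (Q j).walk =
      outsideCost E Q + outsideLength E p := by
  have hrest : ∀ i ∈ Finset.univ.erase j,
      outsideLength E (Function.update Q j ⟨p⟩ i).walk = outsideLength E (Q i).walk :=
    fun i hi => by rw [Function.update_of_ne (Finset.ne_of_mem_erase hi)]
  unfold outsideCost
  rw [← Finset.add_sum_erase _ _ (Finset.mem_univ j), Finset.sum_congr rfl hrest,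
    ← Finset.add_sum_erase _ (fun i => outsideLength E (Q i).walk) (Finset.mem_univ j),
    Function.update_self]
  ring

theorem HasMaderPacking.exists_minimalFor (h : HasMaderPacking G T σ K) (E : Set (Sym2 V)) :
    ∃ Q : Fin K → BundledWalk G, MinimalFor (IsMaderPacking G T σ) (outsideCost E) Q :=
  exists_minimalFor_of_wellFoundedLT _ _ (hasMaderPacking_iff.1 h)

/-! ### Packings with an additional terminal -/

section Augmented

variable [DecidableEq V] {Q : Fin K → BundledWalk G} {i j : Fin K} {p : G.Walk a b}

theorem mem_coveredSet_of_not_hasMaderPacking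
    (hQ : IsMaderPacking G (insert u T) (Function.update σ u c) Q)
    (hno : ¬HasMaderPacking G T σ K) : u ∈ coveredSet Q := by
  by_contra hu
  refine hno (hasMaderPacking_iff.2 ⟨Q, fun i => ?_, hQ.2⟩)
  exact (isMaderPath_insert_update_iff fun h => hu ⟨i, h⟩).1 (hQ.1 i)

theorem hasMaderPacking_of_insert (hQ : IsMaderPacking G (insert u T) (Function.update σ u c) Q)
    (hu : u ∈ (Q j).walk.support) (hp : IsMaderPath G T σ p)
    (hpQ : ∀ i ≠ j, p.support.Disjoint (Q i).walk.support) : HasMaderPacking G T σ K := by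
  refine hasMaderPacking_iff.2 ⟨_, hQ.2.isMaderPacking_update (fun i hij => ?_) hp hpQ⟩
  exact (isMaderPath_insert_update_iff fun h => hQ.2 hij h hu).1 (hQ.1 i)

theorem exists_mem_coveredSet_of_isMaderPath
    (hQ : IsMaderPacking G (insert u T) (Function.update σ u c) Q)
    (hno : ¬HasMaderPacking G T σ K) (hp : IsMaderPath G T σ p) :
    ∃ x ∈ p.support, x ∈ coveredSet Q := by
  by_contra! hdisj
  obtain ⟨j, hj⟩ := mem_coveredSet_of_not_hasMaderPacking hQ hno
  exact hno (hasMaderPacking_of_insert hQ hj hp fun i _ x hx hxi => hdisj x hx ⟨i, hxi⟩)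

theorem card_coveredTerminals_add_one
    (hQ : IsMaderPacking G (insert u T) (Function.update σ u c) Q)
    (hno : ¬HasMaderPacking G T σ K) (hu : u ∉ T) :
    (coveredTerminals T Q).card + 1 = 2 * K := by
  have hcov : u ∉ coveredTerminals T Q := fun h => hu (mem_coveredTerminals.1 h).1
  rw [← hQ.card_coveredTerminals, ← Finset.card_insert_of_notMem hcov]
  congr 1
  ext x
  simp only [Finset.mem_insert, mem_coveredTerminals]
  constructor
  · rintro (rfl | hx)
    · exact ⟨.inl rfl, mem_coveredSet_of_not_hasMaderPacking hQ hno⟩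
    · exact ⟨.inr hx.1, hx.2⟩
  · rintro ⟨rfl | hxT, hx⟩
    · exact .inl rfl
    · exact .inr ⟨hxT, hx⟩

end Augmented

/-! ### The exchange argument -/

/-- The data needed to reroute the member `Q j` of a packing, traversed as `q₁.append q₂`: the
segment `q₂` is to be replaced by the reverse of `p₁`, which comes from an uncovered terminal `r`
and reaches the vertices covered by `Q` only at `w`. -/
structure IsRerouting (T : Finset V) (σ : V → ℕ) (Q : ι → BundledWalk G) (j : ι)
    (p₁ : G.Walk r w) (q₁ : G.Walk a w) (q₂ : G.Walk w b) : Prop where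
  isPath : p₁.IsPath
  isMaderPath : IsMaderPath G T σ (q₁.append q₂)
  isRetracing : IsRetracing (q₁.append q₂) (Q j).walk
  eq_of_mem_coveredSet : ∀ x ∈ p₁.support, x ∈ coveredSet Q → x = w
  eq_or_eq_of_mem : ∀ x ∈ p₁.support, x ∈ T → x = r ∨ x = w
  mem : r ∈ T
  notMem : r ∉ coveredSet Q
  label_ne : σ a ≠ σ r

namespace IsRerouting

variable {Q : ι → BundledWalk G} {j : ι} {p₁ : G.Walk r w} {q₁ : G.Walk a w} {q₂ : G.Walk w b}

theorem mem_support_left (h : IsRerouting T σ Q j p₁ q₁ q₂) (hx : x ∈ q₁.support) :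
    x ∈ (Q j).walk.support :=
  h.isRetracing.mem_support.1 ((q₁.mem_support_append_iff q₂).2 (.inl hx))

theorem mem_support_right (h : IsRerouting T σ Q j p₁ q₁ q₂) (hx : x ∈ q₂.support) :
    x ∈ (Q j).walk.support :=
  h.isRetracing.mem_support.1 ((q₁.mem_support_append_iff q₂).2 (.inr hx))

theorem isMaderPath_append_reverse (h : IsRerouting T σ Q j p₁ q₁ q₂) {T' : Finset V}
    {σ' : V → ℕ} (hT : T' ⊆ T) (ha : a ∈ T') (hr : r ∈ T') (hσ : σ' a ≠ σ' r)
    (hb : w = b → b ∉ T') : IsMaderPath G T' σ' (q₁.append p₁.reverse) := by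
  have hends : ∀ x ∈ q₁.support, x ∈ T' → x = a := by
    intro x hx hxT'
    have hxab := h.isMaderPath.2.2.2.2 x ((q₁.mem_support_append_iff q₂).2 (.inl hx)) (hT hxT')
    refine hxab.resolve_right fun hxb => ?_
    subst hxb
    exact hb (eq_of_mem_support_of_isPath_append h.isMaderPath.1 hx q₂.end_mem_support).symm hxT'
  refine isMaderPath_append h.isMaderPath.1.of_append_left h.isPath.reverse ?_ ha hr hσ ?_ ?_
  · exact fun x hxq hxp =>
      h.eq_of_mem_coveredSet x (by simpa using hxp) ⟨j, h.mem_support_left hxq⟩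
  · exact fun x hx hxT' => .inl (hends x hx hxT')
  · intro x hx hxT'
    rcases h.eq_or_eq_of_mem x (by simpa using hx) (hT hxT') with rfl | rfl
    · exact .inr rfl
    · exact .inl (hends x q₁.end_mem_support hxT')

theorem disjoint_append_reverse (h : IsRerouting T σ Q j p₁ q₁ q₂) (hQ : IsDisjointFamily Q) :
    ∀ i ≠ j, (q₁.append p₁.reverse).support.Disjoint (Q i).walk.support := by
  intro i hij x hx hxi
  refine hij (hQ.eq_of_mem hxi ?_)
  rcases (Walk.mem_support_append_iff ..).1 hx with hx | hx
  · exact h.mem_support_left hx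
  · obtain rfl := h.eq_of_mem_coveredSet x (by simpa using hx) ⟨i, hxi⟩
    exact h.mem_support_left q₁.end_mem_support

theorem target_ne [DecidableEq V] {Q : Fin K → BundledWalk G} {j : Fin K}
    (h : IsRerouting (insert u T) (Function.update σ u c) Q j p₁ q₁ q₂)
    (hQ : IsMaderPacking G (insert u T) (Function.update σ u c) Q)
    (hno : ¬HasMaderPacking G T σ K) (hu : u ∉ T) : b ≠ u := by
  rintro rfl
  have hau : a ≠ b := h.isMaderPath.ne
  have hru : r ≠ b :=
    fun hr => h.notMem (hr ▸ mem_coveredSet_of_not_hasMaderPacking hQ hno)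
  have hσ := h.label_ne
  rw [Function.update_of_ne hau, Function.update_of_ne hru] at hσ
  have hmader : IsMaderPath G T σ (q₁.append p₁.reverse) :=
    h.isMaderPath_append_reverse (Finset.subset_insert _ _)
      ((Finset.mem_insert.1 h.isMaderPath.2.1).resolve_left hau)
      ((Finset.mem_insert.1 h.mem).resolve_left hru) hσ fun _ => hu
  exact hno (hasMaderPacking_of_insert hQ (h.mem_support_right q₂.end_mem_support) hmader
    (h.disjoint_append_reverse hQ.2))

theorem edges_subset_of_minimalFor [Fintype ι] {E : Set (Sym2 V)}
    (h : IsRerouting T σ Q j p₁ q₁ q₂)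
    (hQ : MinimalFor (IsMaderPacking G T σ) (outsideCost E) Q) (hp₁ : ∀ e ∈ p₁.edges, e ∈ E) :
    ∀ e ∈ q₂.edges, e ∈ E := by
  classical
  rcases eq_or_ne w b with rfl | hwb
  · rw [(Walk.isPath_iff_nil.1 h.isMaderPath.1.of_append_right).eq_nil]
    simp
  have hmader := h.isMaderPath_append_reverse (σ' := σ) subset_rfl h.isMaderPath.2.1 h.mem
    h.label_ne fun hwb' => absurd hwb' hwb
  have hle := hQ.le (hQ.1.2.isMaderPacking_update (fun i _ => hQ.1.1 i) hmader
    (h.disjoint_append_reverse hQ.1.2))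
  have hcost := outsideCost_update (E := E) Q j (q₁.append p₁.reverse)
  rw [← h.isRetracing.outsideLength_eq, outsideLength_append, outsideLength_append,
    outsideLength_reverse, outsideLength_eq_zero.2 hp₁] at hcost
  exact outsideLength_eq_zero.1 (by lia)

theorem target_eq [Fintype ι] {κ : Type*} {P : κ → BundledWalk G} {i : κ} {p₂ : G.Walk w z}
    (h : IsRerouting T σ Q j p₁ q₁ q₂) (hP : IsDisjointFamily P)
    (hQ : MinimalFor (IsMaderPacking G T σ) (outsideCost (edgeUnion P)) Q)
    (hp : (p₁.append p₂).IsPath) (hpP : IsRetracing (p₁.append p₂) (P i).walk)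
    (hb : b ∈ (p₁.append p₂).support → b = r ∨ b = z) : b = z ∧ p₂.support ⊆ q₂.support := by
  have hq₂ := h.edges_subset_of_minimalFor hQ fun e he =>
    ⟨i, hpP.mem_edges.1 (by simp [he])⟩
  have hw : w ∈ (P i).walk.support := hpP.mem_support.1 (by simp)
  obtain ⟨hsupp, hedges⟩ := hP.subset_of_edges_subset q₂ hw hq₂
  have hbr : b ≠ r := by
    rintro rfl
    exact h.notMem ⟨j, h.mem_support_right q₂.end_mem_support⟩
  obtain rfl := (hb (hpP.mem_support.2 (hsupp q₂.end_mem_support))).resolve_left hbr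
  refine ⟨rfl, ?_⟩
  have hedges₂ : q₂.edges ⊆ p₂.edges := by
    intro e he
    have hep := hpP.mem_edges.2 (hedges he)
    rw [Walk.edges_append, List.mem_append] at hep
    refine hep.resolve_left fun hep₁ => ?_
    induction e with | _ x y
    have heq : ∀ v, v ∈ p₁.support → v ∈ q₂.support → v = w := fun v hv hv' =>
      h.eq_of_mem_coveredSet v hv ⟨j, h.mem_support_right hv'⟩
    refine (q₂.adj_of_mem_edges he).ne ?_
    rw [heq x (p₁.fst_mem_support_of_mem_edges hep₁) (q₂.fst_mem_support_of_mem_edges he),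
      heq y (p₁.snd_mem_support_of_mem_edges hep₁) (q₂.snd_mem_support_of_mem_edges he)]
  rw [eq_of_isPath_of_edges_subset hp.of_append_right h.isMaderPath.1.of_append_right hedges₂]
  exact List.Subset.refl _

end IsRerouting

theorem target_eq_of_isRetracing [DecidableEq V] {κ : Type*} {P : κ → BundledWalk G} {i : κ}
    {Q : Fin K → BundledWalk G} {j : Fin K} {p₁ : G.Walk r w} {p₂ : G.Walk w z} {q : G.Walk a b}
    (hP : IsDisjointFamily P)
    (hQ : MinimalFor (IsMaderPacking G (insert u T) (Function.update σ u c))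
      (outsideCost (edgeUnion P)) Q)
    (hno : ¬HasMaderPacking G T σ K) (hu : u ∉ T) (hp : (p₁.append p₂).IsPath)
    (hpP : IsRetracing (p₁.append p₂) (P i).walk)
    (hpT : ∀ x ∈ (p₁.append p₂).support, x ∈ T → x = r ∨ x = z)
    (hfirst : ∀ x ∈ p₁.support, x ∈ coveredSet Q → x = w) (hrT : r ∈ T) (hr : r ∉ coveredSet Q)
    (hq : IsMaderPath G (insert u T) (Function.update σ u c) q) (hqj : IsRetracing q (Q j).walk)
    (hw : w ∈ q.support) (ha : Function.update σ u c a ≠ σ r) :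
    b ∈ T ∧ b = z ∧ p₂.support ⊆ q.support := by
  have hucov := mem_coveredSet_of_not_hasMaderPacking hQ.1 hno
  have hru : r ≠ u := fun h => hr (h ▸ hucov)
  have hends : ∀ x ∈ p₁.support, x ∈ insert u T → x = r ∨ x = w := by
    intro x hx hxT
    rcases Finset.mem_insert.1 hxT with rfl | hxT
    · exact .inr (hfirst x hx hucov)
    · rcases hpT x (by simp [hx]) hxT with rfl | rfl
      · exact .inl rfl
      · exact .inr (eq_of_mem_support_of_isPath_append hp hx p₂.end_mem_support)
  obtain ⟨q₁, q₂, rfl⟩ := Walk.mem_support_iff_exists_append.1 hw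
  have hre : IsRerouting (insert u T) (Function.update σ u c) Q j p₁ q₁ q₂ :=
    ⟨hp.of_append_left, hq, hqj, hfirst, hends, Finset.mem_insert_of_mem hrT, hr,
      by rwa [Function.update_of_ne hru]⟩
  have hbT : b ∈ T := (Finset.mem_insert.1 hq.2.2.1).resolve_left (hre.target_ne hQ.1 hno hu)
  obtain ⟨hbz, hsub⟩ := hre.target_eq hP hQ hp hpP fun hb => hpT b hb hbT
  exact ⟨hbT, hbz, fun x hx => (Walk.mem_support_append_iff ..).2 (.inr (hsub hx))⟩

/-- The exchange argument: where `p` first meets a member of `Q`, its initial part can replace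
either part of that member, unless the other end has the label of `r`. The minimality of `Q`
forces the replaced part to follow `p` up to `z`, which cannot be true of both parts. -/
theorem label_eq_of_minimalFor [DecidableEq V] {κ : Type*} {P : κ → BundledWalk G} {i : κ}
    {Q : Fin K → BundledWalk G} {p : G.Walk r z} (hP : IsDisjointFamily P)
    (hQ : MinimalFor (IsMaderPacking G (insert u T) (Function.update σ u c))
      (outsideCost (edgeUnion P)) Q)
    (hno : ¬HasMaderPacking G T σ K) (hu : u ∉ T) (hp : p.IsPath)
    (hpP : IsRetracing p (P i).walk) (hpT : ∀ x ∈ p.support, x ∈ T → x = r ∨ x = z)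
    (hrT : r ∈ T) (hr : r ∉ coveredSet Q) (hpQ : ∃ x ∈ p.support, x ∈ coveredSet Q) :
    z ∈ T ∧ z ≠ r ∧ σ z = σ r ∧ (u ∈ p.support → c ≠ σ r) := by
  obtain ⟨w, ⟨j, hwj⟩, p₁, p₂, rfl, hfirst⟩ := exists_append_forall_mem_imp_eq p _ hpQ
  obtain ⟨a, b, q, hq, hqj, ha⟩ := (hQ.1.1 j).exists_isRetracing_label_ne (σ r)
  have hw : w ∈ q.support := hqj.mem_support.2 hwj
  obtain ⟨hbT, rfl, hsub⟩ :=
    target_eq_of_isRetracing hP hQ hno hu hp hpP hpT hfirst hrT hr hq hqj hw ha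
  have hbu : b ≠ u := ne_of_mem_of_not_mem hbT hu
  refine ⟨hbT, ?_, ?_, fun hup => ?_⟩
  · rintro rfl
    exact hr ⟨j, hqj.mem_support.1 q.end_mem_support⟩
  · by_contra hσ
    rw [← Function.update_of_ne hbu c σ] at hσ
    exact hq.ne (target_eq_of_isRetracing hP hQ hno hu hp hpP hpT hfirst hrT hr hq.reverse
      hqj.reverse (by simpa using hw) hσ).2.1
  · have hup₂ : u ∈ p₂.support := by
      refine ((Walk.mem_support_append_iff ..).1 hup).elim (fun hup₁ => ?_) id
      rw [hfirst u hup₁ (mem_coveredSet_of_not_hasMaderPacking hQ.1 hno)]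
      exact p₂.start_mem_support
    have hua := (hq.2.2.2.2 u (hsub hup₂) (Finset.mem_insert_self _ _)).resolve_right hbu.symm
    rwa [← hua, Function.update_self] at ha

/-! ### Splitting a block -/

theorem exists_mem_support_ne_of_not_adj (p : G.Walk a b) (hab : a ≠ b) (hadj : ¬G.Adj a b) :
    ∃ x ∈ p.support, x ≠ a ∧ x ≠ b := by
  cases p with
  | nil => exact absurd rfl hab
  | @cons _ x _ hx p => exact ⟨x, by simp, hx.ne', fun hxb => hadj (hxb ▸ hx)⟩

theorem exists_isRetracing_label_eq [DecidableEq V] {P : Fin K → BundledWalk G}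
    (hP : IsMaderPacking G T (Function.update σ s c) P) (hno : ¬HasMaderPacking G T σ K)
    (hsT : s ∈ T) :
    ∃ (i₀ : Fin K) (z : V) (q : G.Walk s z), IsMaderPath G T (Function.update σ s c) q ∧
      IsRetracing q (P i₀).walk ∧ σ z = σ s ∧ ∀ i ≠ i₀, IsMaderPath G T σ (P i).walk := by
  obtain ⟨i₀, hs⟩ : ∃ i₀, s ∈ (P i₀).walk.support := by
    by_contra! hs
    exact hno (hasMaderPacking_iff.2 ⟨P, fun i => (isMaderPath_update_iff (hs i)).1 (hP.1 i), hP.2⟩)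
  have hothers : ∀ i ≠ i₀, IsMaderPath G T σ (P i).walk := fun i hi =>
    (isMaderPath_update_iff fun hsi => hP.2 hi hsi hs).1 (hP.1 i)
  obtain ⟨z, q, hq, hqP⟩ := (hP.1 i₀).exists_isRetracing hsT hs
  refine ⟨i₀, z, q, hq, hqP, ?_, hothers⟩
  by_contra hσ
  have hqσ : IsMaderPath G T σ q := ⟨hq.1, hq.2.1, hq.2.2.1, Ne.symm hσ, hq.2.2.2.2⟩
  refine hno (hasMaderPacking_iff.2 ⟨_, hP.2.isMaderPacking_update hothers hqσ fun i hi x hx => ?_⟩)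
  exact hP.2 hi.symm (hqP.mem_support.1 hx)

theorem HasMaderPacking.of_update [DecidableEq V] (hsT : s ∈ T)
    (hsplit : HasMaderPacking G T (Function.update σ s c) K)
    (hadd : ∀ u ∉ T, HasMaderPacking G (insert u T) (Function.update σ u (σ s)) K)
    (hadj : ∀ x ∈ T, ∀ y ∈ T, σ x = σ y → ¬G.Adj x y) : HasMaderPacking G T σ K := by
  by_contra hno
  obtain ⟨P, hP⟩ := hasMaderPacking_iff.1 hsplit
  obtain ⟨i₀, z, q, hq, hqP, hσz, hothers⟩ := exists_isRetracing_label_eq hP hno hsT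
  obtain ⟨u, huq, hus, huz⟩ :=
    exists_mem_support_ne_of_not_adj q hq.ne (hadj s hsT z hq.2.2.1 hσz.symm)
  have huT : u ∉ T := fun huT => (hq.2.2.2.2 u huq huT).elim hus huz
  obtain ⟨Q, hQ⟩ := (hadd u huT).exists_minimalFor (edgeUnion P)
  have hcard := card_coveredTerminals_add_one hQ.1 hno huT
  have hcardP := hP.card_coveredTerminals
  obtain ⟨r, hrP, hrQ⟩ := Finset.exists_mem_notMem_of_card_lt_card
    (s := coveredTerminals T Q) (t := coveredTerminals T P) (by lia)
  obtain ⟨hrT, i, hri⟩ := mem_coveredTerminals.1 hrP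
  replace hrQ : r ∉ coveredSet Q := fun h => hrQ (mem_coveredTerminals.2 ⟨hrT, h⟩)
  have hmeets : ∃ x ∈ (P i).walk.support, x ∈ coveredSet Q := by
    rcases eq_or_ne i i₀ with rfl | hi
    · exact ⟨u, hqP.mem_support.1 huq, mem_coveredSet_of_not_hasMaderPacking hQ.1 hno⟩
    · exact exists_mem_coveredSet_of_isMaderPath hQ.1 hno (hothers i hi)
  obtain ⟨y, p, hp, hpP⟩ := (hP.1 i).exists_isRetracing hrT hri
  simp only [← hpP.mem_support] at hmeets
  obtain ⟨hyT, hyr, hσy, hup⟩ :=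
    label_eq_of_minimalFor hP.2 hQ hno huT hp.1 hpP hp.2.2.2.2 hrT hrQ hmeets
  rcases eq_or_ne i i₀ with rfl | hi
  · have hrs : σ r = σ s := by
      rcases hq.2.2.2.2 r (hqP.mem_support.2 hri) hrT with rfl | rfl
      · rfl
      · exact hσz
    exact hup (hpP.mem_support.2 (hqP.mem_support.1 huq)) hrs.symm
  · exact (hothers i hi).label_ne_of_mem (hpP.mem_support.1 p.end_mem_support) hyT hri hrT hyr hσy

/-! ### Singleton blocks -/

/-- A family of disjoint walks that is a Mader path packing except for its member `P i₀`, which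
has only its first terminal and is still pending at the vertex `x`. -/
structure IsNearPacking (T : Finset V) (σ : V → ℕ) (P : ι → BundledWalk G) (i₀ : ι) (x : V) :
    Prop where
  isMaderPath : ∀ i ≠ i₀, IsMaderPath G T σ (P i).walk
  isDisjointFamily : IsDisjointFamily P
  isPath : (P i₀).walk.IsPath
  source_mem : (P i₀).source ∈ T
  eq_source_of_mem : ∀ y ∈ (P i₀).walk.support, y ∈ T → y = (P i₀).source
  target_eq : (P i₀).target = x

theorem exists_isNearPacking [DecidableEq V] {Q : Fin K → BundledWalk G}
    (hQ : IsMaderPacking G (insert u T) (Function.update σ u c) Q)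
    (hno : ¬HasMaderPacking G T σ K) (hu : u ∉ T) :
    ∃ (P : Fin K → BundledWalk G) (i₀ : Fin K),
      IsNearPacking T σ P i₀ u ∧ coveredSet P = coveredSet Q := by
  obtain ⟨j, huj⟩ := mem_coveredSet_of_not_hasMaderPacking hQ hno
  obtain ⟨z, q, hq, hqj⟩ := (hQ.1 j).exists_isRetracing (Finset.mem_insert_self u T) huj
  have hzT : z ∈ T := (Finset.mem_insert.1 hq.2.2.1).resolve_left hq.ne.symm
  refine ⟨Function.update Q j ⟨q.reverse⟩, j, ?_, hqj.reverse.coveredSet_update⟩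
  constructor
  case isMaderPath =>
    intro i hi
    rw [Function.update_of_ne hi]
    exact (isMaderPath_insert_update_iff fun hui => hQ.2 hi hui huj).1 (hQ.1 i)
  case isDisjointFamily =>
    exact hQ.2.update fun i hi x hx => hQ.2 hi.symm (hqj.reverse.mem_support.1 hx)
  all_goals rw [Function.update_self]
  case isPath => exact hq.1.reverse
  case source_mem => exact hzT
  case eq_source_of_mem =>
    intro y hy hyT
    have hyuz := hq.2.2.2.2 y (by simpa using hy) (Finset.mem_insert_of_mem hyT)
    exact hyuz.resolve_left (ne_of_mem_of_not_mem hyT hu)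

namespace IsNearPacking

theorem card_coveredTerminals [DecidableEq V] {P : Fin K → BundledWalk G} {i₀ : Fin K}
    (hP : IsNearPacking T σ P i₀ x) : (coveredTerminals T P).card + 1 = 2 * K := by
  have hpending : T.filter (· ∈ (P i₀).walk.support) = {(P i₀).source} := by
    ext y
    rw [Finset.mem_filter, Finset.mem_singleton]
    refine ⟨fun hy => hP.eq_source_of_mem y hy.2 hy.1, ?_⟩
    rintro rfl
    exact ⟨hP.source_mem, (P i₀).walk.start_mem_support⟩
  have hothers : ∀ i ∈ Finset.univ.erase i₀, (T.filter (· ∈ (P i).walk.support)).card = 2 :=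
    fun i hi => (hP.isMaderPath i (Finset.ne_of_mem_erase hi)).card_filter_mem_support
  rw [hP.isDisjointFamily.card_coveredTerminals, ← Finset.add_sum_erase _ _ (Finset.mem_univ i₀),
    Finset.sum_congr rfl hothers, hpending]
  have hpos := i₀.pos
  simp only [Finset.card_singleton, Finset.sum_const, Finset.mem_univ, Finset.card_erase_of_mem,
    Finset.card_univ, Fintype.card_fin, smul_eq_mul]
  lia

theorem hasMaderPacking_of_adj {P : Fin K → BundledWalk G} {i₀ : Fin K}
    (hP : IsNearPacking T σ P i₀ x) (hinj : Set.InjOn σ T) (htT : t ∈ T) (ht : t ∉ coveredSet P)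
    (hxt : G.Adj x t) : HasMaderPacking G T σ K := by
  obtain rfl := hP.target_eq
  have htP : ∀ i, t ∉ (P i).walk.support := fun i hi => ht ⟨i, hi⟩
  have hsource : (P i₀).source ≠ t := ne_of_mem_of_not_mem (P i₀).walk.start_mem_support (htP i₀)
  have hmader : IsMaderPath G T σ ((P i₀).walk.concat hxt) := by
    refine ⟨hP.isPath.concat (htP i₀) hxt, hP.source_mem, htT,
      hinj.ne hP.source_mem htT hsource, fun y hy hyT => ?_⟩
    rw [Walk.support_concat, List.mem_append, List.mem_singleton] at hy
    exact hy.imp_left fun hy => hP.eq_source_of_mem y hy hyT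
  refine hasMaderPacking_iff.2
    ⟨_, hP.isDisjointFamily.isMaderPacking_update hP.isMaderPath hmader fun i hi y hy hyi => ?_⟩
  rw [Walk.support_concat, List.mem_append, List.mem_singleton] at hy
  rcases hy with hy | rfl
  · exact hP.isDisjointFamily hi hyi hy
  · exact htP i hyi

section Exchange

variable [DecidableEq V] {P : ι → BundledWalk G} {i₀ : ι} {Q : Fin K → BundledWalk G}

theorem exists_mem_coveredSet_of_adj (hP : IsNearPacking T σ P i₀ x)
    (hQ : IsMaderPacking G (insert u T) (Function.update σ u c) Q)
    (hno : ¬HasMaderPacking G T σ K) (hinj : Set.InjOn σ T) (hu : u ∉ T) (hxu : G.Adj x u) :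
    ∃ y ∈ (P i₀).walk.support, y ∈ coveredSet Q := by
  by_contra! hdisj
  obtain rfl := hP.target_eq
  obtain ⟨j, huj⟩ := mem_coveredSet_of_not_hasMaderPacking hQ hno
  obtain ⟨z, q, hq, hqj⟩ := (hQ.1 j).exists_isRetracing (Finset.mem_insert_self u T) huj
  have hcov : ∀ y ∈ q.support, y ∈ coveredSet Q := fun y hy => ⟨j, hqj.mem_support.1 hy⟩
  have hzT : z ∈ T := (Finset.mem_insert.1 hq.2.2.1).resolve_left hq.ne.symm
  have hsz : (P i₀).source ≠ z := by
    rintro rfl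
    exact hdisj _ (P i₀).walk.start_mem_support (hcov _ q.end_mem_support)
  have hqT : ∀ y ∈ q.support, y ∈ T → y = z := fun y hy hyT =>
    (hq.2.2.2.2 y hy (Finset.mem_insert_of_mem hyT)).resolve_left (ne_of_mem_of_not_mem hyT hu)
  have hpath : (Walk.cons hxu q).IsPath :=
    hq.1.cons fun hx => hdisj _ (P i₀).walk.end_mem_support (hcov _ hx)
  have hmader : IsMaderPath G T σ ((P i₀).walk.append (.cons hxu q)) := by
    refine isMaderPath_append hP.isPath hpath (fun y hyp hyq => ?_) hP.source_mem hzT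
      (hinj.ne hP.source_mem hzT hsz) (fun y hy hyT => .inl (hP.eq_source_of_mem y hy hyT)) ?_
    · exact (List.mem_cons.1 hyq).resolve_right fun hyq => hdisj y hyp (hcov y hyq)
    · intro y hy hyT
      rcases List.mem_cons.1 hy with rfl | hy
      · exact .inl (hP.eq_source_of_mem _ (P i₀).walk.end_mem_support hyT)
      · exact .inr (hqT y hy hyT)
  refine hno (hasMaderPacking_of_insert hQ huj hmader fun i hi y hy hyi => ?_)
  rw [Walk.mem_support_append_iff, Walk.support_cons, List.mem_cons] at hy
  rcases hy with hy | rfl | hy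
  · exact hdisj y hy ⟨i, hyi⟩
  · exact hdisj _ (P i₀).walk.end_mem_support ⟨i, hyi⟩
  · exact hQ.2 hi hyi (hqj.mem_support.1 hy)

theorem mem_coveredSet_of_minimalFor (hP : IsNearPacking T σ P i₀ x)
    (hQ : MinimalFor (IsMaderPacking G (insert u T) (Function.update σ u c))
      (outsideCost (edgeUnion P)) Q)
    (hno : ¬HasMaderPacking G T σ K) (hinj : Set.InjOn σ T) (hu : u ∉ T) (hxu : G.Adj x u)
    (hrT : r ∈ T) (hr : r ∈ coveredSet P) : r ∈ coveredSet Q := by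
  by_contra hrQ
  obtain ⟨i, hri⟩ := hr
  rcases eq_or_ne i i₀ with rfl | hi
  · obtain rfl := hP.eq_source_of_mem r hri hrT
    obtain ⟨htarget, hne, -⟩ := label_eq_of_minimalFor hP.isDisjointFamily hQ hno hu hP.isPath
      (.refl _) (fun y hy hyT => .inl (hP.eq_source_of_mem y hy hyT)) hrT hrQ
      (hP.exists_mem_coveredSet_of_adj hQ.1 hno hinj hu hxu)
    exact hne (hP.eq_source_of_mem _ (P i).walk.end_mem_support htarget)
  · obtain ⟨z, p, hp, hpP⟩ := (hP.isMaderPath i hi).exists_isRetracing hrT hri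
    obtain ⟨-, -, hσ, -⟩ := label_eq_of_minimalFor hP.isDisjointFamily hQ hno hu hp.1 hpP
      hp.2.2.2.2 hrT hrQ (exists_mem_coveredSet_of_isMaderPath hQ.1 hno hp)
    exact hp.2.2.2.1 hσ.symm

end Exchange

end IsNearPacking

theorem IsNearPacking.hasMaderPacking [DecidableEq V] {P : Fin K → BundledWalk G} {i₀ : Fin K}
    (hP : IsNearPacking T σ P i₀ x) (hinj : Set.InjOn σ T)
    (hadd : ∀ u ∉ T, ∃ c, HasMaderPacking G (insert u T) (Function.update σ u c) K)
    (htT : t ∈ T) (ht : t ∉ coveredSet P) (p : G.Walk x t)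
    (hpT : ∀ y ∈ p.support.tail, y ∈ T → y = t) : HasMaderPacking G T σ K := by
  by_contra hno
  induction p generalizing P i₀ with
  | nil =>
    obtain rfl := hP.target_eq
    exact ht ⟨i₀, (P i₀).walk.end_mem_support⟩
  | @cons x u t hxu p ih =>
    rw [Walk.support_cons, List.tail_cons] at hpT
    by_cases huT : u ∈ T
    · obtain rfl := hpT u p.start_mem_support huT
      exact hno (hP.hasMaderPacking_of_adj hinj huT ht hxu)
    obtain ⟨c, hc⟩ := hadd u huT
    obtain ⟨Q, hQ⟩ := hc.exists_minimalFor (edgeUnion P)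
    have hsub : coveredTerminals T P ⊆ coveredTerminals T Q := fun r hr => by
      obtain ⟨hrT, hrP⟩ := mem_coveredTerminals.1 hr
      exact mem_coveredTerminals.2
        ⟨hrT, hP.mem_coveredSet_of_minimalFor hQ hno hinj huT hxu hrT hrP⟩
    have hcardP := hP.card_coveredTerminals
    have hcardQ := card_coveredTerminals_add_one hQ.1 hno huT
    have heq := Finset.eq_of_subset_of_card_le hsub (by lia)
    have htQ : t ∉ coveredSet Q := fun htQ =>
      ht (mem_coveredTerminals.1 (heq ▸ mem_coveredTerminals.2 ⟨htT, htQ⟩)).2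
    obtain ⟨P', i₁, hP', hcov⟩ := exists_isNearPacking hQ.1 hno huT
    exact ih hP' htT (hcov ▸ htQ) fun y hy => hpT y (List.mem_of_mem_tail hy)

theorem isNearPacking_cons {Q : Fin K → BundledWalk G} (hQ : IsMaderPacking G T σ Q) (hsT : s ∈ T)
    (hs : s ∉ coveredSet Q) :
    IsNearPacking T σ (Fin.cons (α := fun _ => BundledWalk G) ⟨(Walk.nil : G.Walk s s)⟩ Q) 0 s := by
  constructor
  case isMaderPath =>
    intro i hi
    obtain ⟨i, rfl⟩ := Fin.exists_succ_eq.2 hi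
    exact hQ.1 i
  case isDisjointFamily =>
    have hdisj : ∀ i, (Walk.nil : G.Walk s s).support.Disjoint (Q i).walk.support := fun i =>
      List.singleton_disjoint.2 fun hsi => hs ⟨i, hsi⟩
    intro i j hij
    cases i using Fin.cases <;> cases j using Fin.cases
    · exact absurd rfl hij
    · exact hdisj _
    · exact (hdisj _).symm
    · exact hQ.2 (ne_of_apply_ne Fin.succ hij)
  case isPath => exact .nil
  case source_mem => exact hsT
  case eq_source_of_mem => exact fun y hy _ => List.mem_singleton.1 hy
  case target_eq => rfl

/-! ### Multiway cuts -/

/-- `X` is a vertex multiway cut: every Mader path contains a vertex of `X`. -/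
def IsMaderCut (G : SimpleGraph V) (T : Finset V) (σ : V → ℕ) (X : Finset V) : Prop :=
  ∀ (u v : V) (p : G.Walk u v), IsMaderPath G T σ p → ∃ x ∈ X, x ∈ p.support

/-- The graph `G` with the vertices in `D` made isolated. Deleting vertices in this way keeps the
vertex type fixed. -/
def deleteVertices (G : SimpleGraph V) (D : Finset V) : SimpleGraph V :=
  G.deleteEdges {e | ∃ x ∈ D, x ∈ e}

theorem deleteEdges_lt {S : Set (Sym2 V)} (hxy : G.Adj x y) (hS : s(x, y) ∈ S) :
    G.deleteEdges S < G :=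
  lt_of_le_not_ge (deleteEdges_le S) fun h => (deleteEdges_adj.1 (h hxy)).2 hS

theorem notMem_of_mem_support_deleteVertices {D : Finset V} {p : (deleteVertices G D).Walk a b}
    (hb : b ∉ D) (hx : x ∈ p.support) : x ∉ D := by
  intro hxD
  obtain rfl | ⟨e, he, hxe⟩ := Walk.mem_support_iff_exists_mem_edges.1 hx
  · exact hb hxD
  · have heG := p.edges_subset_edgeSet he
    rw [deleteVertices, edgeSet_deleteEdges] at heG
    exact heG.2 ⟨x, hxD, hxe⟩

theorem exists_isMaderPacking_of_deleteVertices [DecidableEq V] {D : Finset V}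
    (h : HasMaderPacking (deleteVertices G D) (T \ D) σ K) :
    ∃ Q : Fin K → BundledWalk G, IsMaderPacking G T σ Q ∧ ∀ x ∈ D, x ∉ coveredSet Q := by
  obtain ⟨Q, hQ, hdisj⟩ := hasMaderPacking_iff.1 h
  have hG : ∀ i, ∀ e ∈ (Q i).walk.edges, e ∈ G.edgeSet := fun i e he =>
    edgeSet_mono (deleteEdges_le _) ((Q i).walk.edges_subset_edgeSet he)
  have hD : ∀ i, ∀ x ∈ (Q i).walk.support, x ∉ D := fun i x hx =>
    notMem_of_mem_support_deleteVertices (Finset.mem_sdiff.1 (hQ i).2.2.1).2 hx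
  refine ⟨fun i => ⟨(Q i).walk.transfer G (hG i)⟩, ⟨fun i => ?_, fun i j hij => ?_⟩, ?_⟩
  · refine (isMaderPath_congr (fun x hx => ?_) fun _ _ => rfl).1 ((hQ i).transfer (hG i))
    rw [Walk.support_transfer] at hx
    rw [Finset.mem_sdiff, and_iff_left (hD i x hx)]
  · simpa only [Walk.support_transfer] using hdisj hij
  · rintro x hxD ⟨i, hx⟩
    rw [Walk.support_transfer] at hx
    exact hD i x hx hxD

theorem HasMaderPacking.mono (h : HasMaderPacking H T σ K) (hHG : H ≤ G) :
    HasMaderPacking G T σ K := by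
  obtain ⟨Q, hQ, hdisj⟩ := hasMaderPacking_iff.1 h
  have hG : ∀ i, ∀ e ∈ (Q i).walk.edges, e ∈ G.edgeSet := fun i e he =>
    edgeSet_mono hHG ((Q i).walk.edges_subset_edgeSet he)
  refine hasMaderPacking_iff.2
    ⟨fun i => ⟨(Q i).walk.transfer G (hG i)⟩, fun i => (hQ i).transfer (hG i), fun i j hij => ?_⟩
  simpa only [Walk.support_transfer] using hdisj hij

theorem hasMaderPacking_zero : HasMaderPacking G T σ 0 :=
  hasMaderPacking_iff.2 ⟨Fin.elim0, fun i => i.elim0, fun i => i.elim0⟩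

namespace IsMaderCut

variable {X D : Finset V}

theorem of_deleteEdges {S : Set (Sym2 V)} (h : IsMaderCut (G.deleteEdges S) T σ X)
    (hS : ∀ x y, s(x, y) ∈ S → x ∈ T ∧ y ∈ T ∧ σ x = σ y) : IsMaderCut G T σ X := by
  intro a b p hp
  have hG : ∀ e ∈ p.edges, e ∈ (G.deleteEdges S).edgeSet := by
    intro e he
    rw [edgeSet_deleteEdges]
    refine ⟨p.edges_subset_edgeSet he, fun heS => ?_⟩
    induction e with | _ x y
    obtain ⟨hxT, hyT, hσ⟩ := hS x y heS
    exact hp.label_ne_of_mem (p.fst_mem_support_of_mem_edges he) hxT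
      (p.snd_mem_support_of_mem_edges he) hyT (p.adj_of_mem_edges he).ne hσ
  simpa only [Walk.support_transfer] using h a b _ (hp.transfer hG)

theorem union_of_deleteVertices [DecidableEq V] (h : IsMaderCut (deleteVertices G D) (T \ D) σ X) :
    IsMaderCut G T σ (X ∪ D) := by
  intro a b p hp
  by_cases hD : ∃ x ∈ D, x ∈ p.support
  · obtain ⟨x, hx, hxp⟩ := hD
    exact ⟨x, Finset.mem_union_right _ hx, hxp⟩
  push Not at hD
  have hG : ∀ e ∈ p.edges, e ∈ (deleteVertices G D).edgeSet := by
    intro e he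
    rw [deleteVertices, edgeSet_deleteEdges]
    refine ⟨p.edges_subset_edgeSet he, ?_⟩
    rintro ⟨x, hxD, hxe⟩
    exact hD x hxD (Walk.mem_support_iff_exists_mem_edges.2 (.inr ⟨e, he, hxe⟩))
  have hp' : IsMaderPath G (T \ D) σ p := by
    refine (isMaderPath_congr (fun x hx => ?_) fun _ _ => rfl).1 hp
    rw [Finset.mem_sdiff, and_iff_left fun hxD => hD x hxD hx]
  obtain ⟨x, hxX, hx⟩ := h a b _ (hp'.transfer hG)
  rw [Walk.support_transfer] at hx
  exact ⟨x, Finset.mem_union_left _ hxX, hx⟩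

theorem of_insert [DecidableEq V] (h : IsMaderCut G (insert u T) (Function.update σ u c) X)
    (hu : u ∉ T) : IsMaderCut G T σ X := by
  intro a b p hp
  by_cases hup : u ∈ p.support
  · obtain ⟨a', b', q, hq, hqp, ha'⟩ := hp.exists_isRetracing_label_ne c
    have huq : u ∈ q.support := hqp.mem_support.2 hup
    obtain ⟨x, hxX, hx⟩ := h _ _ _ (hq.insert_takeUntil hu huq ha')
    exact ⟨x, hxX, hqp.mem_support.1 (q.support_takeUntil_subset_support huq hx)⟩
  · exact h a b p ((isMaderPath_insert_update_iff hup).2 hp)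

theorem of_update [DecidableEq V] (h : IsMaderCut G T (Function.update σ s c) X)
    (hc : ∀ x ∈ T, σ x ≠ c) : IsMaderCut G T σ X := by
  intro a b p hp
  obtain ⟨hpath, ha, hb, hσ, hint⟩ := hp
  exact h a b p ⟨hpath, ha, hb, update_label_ne hc ha hb hσ, hint⟩

end IsMaderCut

/-! ### The induction -/

/-- The graph joining the terminals that lie in different blocks. It grows when a terminal is
added or a block is split, so it serves as the induction measure. -/
def separationGraph (T : Finset V) (σ : V → ℕ) : SimpleGraph V where
  Adj x y := x ∈ T ∧ y ∈ T ∧ σ x ≠ σ y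
  symm := ⟨fun _ _ h => ⟨h.2.1, h.1, h.2.2.symm⟩⟩
  loopless := ⟨fun _ h => h.2.2 rfl⟩

theorem separationGraph_lt_insert [DecidableEq V] (hu : u ∉ T) (hx : x ∈ T) (hσ : σ x ≠ c) :
    separationGraph T σ < separationGraph (insert u T) (Function.update σ u c) := by
  have hne : ∀ y ∈ T, y ≠ u := fun y hy => ne_of_mem_of_not_mem hy hu
  refine lt_of_le_not_ge (fun y z hyz => ?_) fun hge => ?_
  · obtain ⟨hy, hz, hyz⟩ := hyz
    refine ⟨Finset.mem_insert_of_mem hy, Finset.mem_insert_of_mem hz, ?_⟩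
    rwa [Function.update_of_ne (hne y hy), Function.update_of_ne (hne z hz)]
  · refine hu (@hge x u ⟨Finset.mem_insert_of_mem hx, Finset.mem_insert_self u T, ?_⟩).2.1
    rwa [Function.update_self, Function.update_of_ne (hne x hx)]

theorem separationGraph_lt_update [DecidableEq V] (hc : ∀ x ∈ T, σ x ≠ c) (ha : a ∈ T)
    (hb : b ∈ T) (hab : a ≠ b) (hσ : σ a = σ b) :
    separationGraph T σ < separationGraph T (Function.update σ a c) := by
  refine lt_of_le_not_ge (fun y z hyz => ?_) fun hge => ?_
  · exact ⟨hyz.1, hyz.2.1, update_label_ne hc hyz.1 hyz.2.1 hyz.2.2⟩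
  · refine (@hge a b ⟨ha, hb, ?_⟩).2.2 hσ
    rw [Function.update_self, Function.update_of_ne hab.symm]
    exact (hc b hb).symm

theorem hasMaderPacking_of_injOn [DecidableEq V] (hinj : Set.InjOn σ T)
    (hadd : ∀ u ∉ T, ∃ c, HasMaderPacking G (insert u T) (Function.update σ u c) (k + 1))
    {p : G.Walk s t} (hp : IsMaderPath G T σ p)
    (hdel : HasMaderPacking (deleteVertices G {s, t}) (T \ {s, t}) σ k) :
    HasMaderPacking G T σ (k + 1) := by
  obtain ⟨Q, hQ, hQst⟩ := exists_isMaderPacking_of_deleteVertices hdel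
  refine (isNearPacking_cons hQ hp.2.1 (hQst s (by simp))).hasMaderPacking hinj hadd hp.2.2.1
    ?_ p ?_
  · rintro ⟨i, hi⟩
    cases i using Fin.cases with
    | zero => exact hp.ne (List.mem_singleton.1 hi).symm
    | succ i => exact hQst t (by simp) ⟨i, hi⟩
  · have hnodup := hp.1.support_nodup
    rw [← Walk.cons_tail_support, List.nodup_cons] at hnodup
    intro y hy hyT
    exact (hp.2.2.2.2 y (List.mem_of_mem_tail hy) hyT).resolve_left
      (ne_of_mem_of_not_mem hy hnodup.1)

theorem hasMaderPacking_of_forall_isMaderCut [Finite V]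
    (hcut : ∀ X, IsMaderCut G T σ X → 2 * k < X.card) : HasMaderPacking G T σ (k + 1) := by
  classical
  induction G using WellFoundedLT.induction generalizing T σ k with | ind G ihG
  induction hS : separationGraph T σ using WellFoundedGT.induction generalizing T σ with | ind S ihS
  subst hS
  obtain ⟨s, t, p, hp⟩ : ∃ (s t : V) (p : G.Walk s t), IsMaderPath G T σ p := by
    by_contra! hno
    simpa using hcut ∅ fun s t p hp => absurd hp (hno s t p)
  have hadd : ∀ u ∉ T, ∀ c, HasMaderPacking G (insert u T) (Function.update σ u c) (k + 1) := by
    intro u hu c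
    obtain ⟨x, y, q, hq, -, hx⟩ := hp.exists_isRetracing_label_ne c
    exact ihS _ (separationGraph_lt_insert hu hq.2.1 hx) (fun X hX => hcut X (hX.of_insert hu)) rfl
  by_cases hblock : ∃ x ∈ T, ∃ y ∈ T, σ x = σ y ∧ G.Adj x y
  · obtain ⟨x, hx, y, hy, hσ, hxy⟩ := hblock
    refine (ihG _ (deleteEdges_lt hxy (Set.mem_singleton _)) fun X hX =>
      hcut X (hX.of_deleteEdges fun v w hvw => ?_)).mono (deleteEdges_le _)
    obtain ⟨rfl, rfl⟩ | ⟨rfl, rfl⟩ := Sym2.eq_iff.1 hvw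
    · exact ⟨hx, hy, hσ⟩
    · exact ⟨hy, hx, hσ.symm⟩
  push Not at hblock
  by_cases hinj : Set.InjOn σ T
  · refine hasMaderPacking_of_injOn hinj (fun u hu => ⟨0, hadd u hu 0⟩) hp ?_
    cases k with
    | zero => exact hasMaderPacking_zero
    | succ k =>
      have hadj := p.adj_snd (Walk.not_nil_of_ne hp.ne)
      have hlt : deleteVertices G {s, t} < G :=
        deleteEdges_lt hadj ⟨s, by simp, Sym2.mem_mk_left _ _⟩
      refine ihG _ hlt fun X hX => ?_
      have := hcut _ hX.union_of_deleteVertices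
      have := Finset.card_union_le X {s, t}
      have := Finset.card_le_two (a := s) (b := t)
      lia
  · simp only [Set.InjOn, not_forall] at hinj
    obtain ⟨a, ha, b, hb, hσ, hab⟩ := hinj
    obtain ⟨c, hc⟩ := Infinite.exists_notMem_finset (T.image σ)
    replace hc : ∀ x ∈ T, σ x ≠ c := fun x hx hxc => hc (Finset.mem_image.2 ⟨x, hx, hxc⟩)
    refine .of_update ha (ihS _ (separationGraph_lt_update hc ha hb hab hσ)
      (fun X hX => hcut X (hX.of_update hc)) rfl) (fun u hu => hadd u hu _) hblock

end Packings

/-- A vertex multiway cut of size at most twice the packing number.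
Let `ν = ν(G, 𝒯)` be the Mader path-packing number of `(G, 𝒯)`. Then there is a set
`X ⊆ V(G)` (possibly intersecting `T`) with `|X| ≤ 2ν` meeting every `𝒯`-path of `G`. -/
theorem stmt_17 {V : Type*} [Fintype V] [DecidableEq V]
    (G : SimpleGraph V) (T : Finset V) (σ : V → ℕ)
    (ν : ℕ) (hν : MaderNu G T σ ν) :
    ∃ X : Finset V, X.card ≤ 2 * ν ∧
      ∀ (u v : V) (p : G.Walk u v), IsMaderPath G T σ p → ∃ x ∈ X, x ∈ p.support := by
  by_contra! hcut
  have hpack : HasMaderPacking G T σ (ν + 1) := hasMaderPacking_of_forall_isMaderCut fun X hX => by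
    by_contra! hcard
    obtain ⟨u, v, p, hp, hpX⟩ := hcut X hcard
    obtain ⟨x, hxX, hxp⟩ := hX u v p hp
    exact hpX x hxX hxp
  exact (hν.2 _ hpack).not_gt ν.lt_succ_self
end

section
/- For every pair of natural numbers k ≥ q ≥ 1 there exist a field F, a finite set V, a skew-symmetric matrix A over F indexed by V, a set T ⊆ V with |T| = k such that the principal submatrix A[T] is the zero matrix, and a family 𝒮 of q-element subsets of V ∖ T, such that every subfamily 𝒮' ⊆ 𝒮 with the following property has |𝒮'| ≥ binomial(k, q): for every X ⊆ T with |X| = q, if some Y ∈ 𝒮 repairs X with respect to A, then some Y' ∈ 𝒮' repairs X with respect to A. -/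
/-- The principal submatrix `A[S]` of a matrix `A` indexed by `V`, for `S ⊆ V`. -/
def principalSub {V F : Type*} (A : Matrix V V F) (S : Finset V) : Matrix ↥S ↥S F :=
  A.submatrix (fun x => (x : V)) (fun x => (x : V))

/-- `S` is feasible for `A`: the principal submatrix `A[S]` is nonsingular. -/
def Feasible {V F : Type*} [DecidableEq V] [Field F] (A : Matrix V V F)
    (S : Finset V) : Prop :=
  (principalSub A S).det ≠ 0

/-- `Y` repairs `X` with respect to `A`: `X` is infeasible, `X ∩ Y = ∅`, `X ∪ Y` is
feasible, and `X ∪ Y` is a minimal feasible superset of `X`. -/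
def Repairs {V F : Type*} [DecidableEq V] [Field F] (A : Matrix V V F)
    (X Y : Finset V) : Prop :=
  ¬ Feasible A X ∧ X ∩ Y = ∅ ∧ Feasible A (X ∪ Y) ∧
    ∀ F₀ : Finset V, X ⊆ F₀ → F₀ ⊂ X ∪ Y → ¬ Feasible A F₀

/-!
Let `σ` be injective. In a matrix whose nonzero entries are at the positions `(u, σ u)`, the
principal submatrix on `S` is nonsingular exactly when `S` is closed under `σ`. If `σ` is moreover
an involution, and `X` is nonempty and disjoint from `σ X`, then the least feasible superset of
`X` is `X ∪ σ X`, so `σ X` is the only set that repairs `X`. The symplectic matrix `J` has this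
shape, with `σ` exchanging the two copies of `Fin k`. With the first copy as `T` and all
`q`-subsets of the second as the family, each of the `k.choose q` members is the only repair of
some `X ⊆ T`, and none can be left out.
-/

/-- `A` is a monomial matrix with pattern `σ`: the only nonzero entry of row `u` is in column `σ u`.
The pattern need not be a permutation here. When it is an involution without fixed points, `A` is
supported on the edges of a perfect matching. -/
def IsMonomialMatrix {V R : Type*} [Zero R] (A : Matrix V V R) (σ : V → V) : Prop :=
  ∀ u v, A u v ≠ 0 ↔ v = σ u

theorem isMonomialMatrix_J (l R : Type*) [DecidableEq l] [CommRing R] [Nontrivial R] :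
    IsMonomialMatrix (Matrix.J l R) Sum.swap := by
  rintro (i | i) (j | j) <;> simp [Matrix.J, Matrix.one_apply, eq_comm]

namespace IsMonomialMatrix

variable {V : Type*} [DecidableEq V] {σ : V → V} {S T X Y : Finset V}

theorem apply_eq_zero_of_disjoint_image {R : Type*} [Zero R] {A : Matrix V V R}
    (hA : IsMonomialMatrix A σ) (hT : Disjoint T (T.image σ)) {u v : V} (hu : u ∈ T) (hv : v ∈ T) :
    A u v = 0 := by
  by_contra huv
  rw [(hA u v).mp huv] at hv
  exact Finset.disjoint_left.mp hT hv (Finset.mem_image_of_mem σ hu)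

variable {F : Type*} [Field F] {A : Matrix V V F}

theorem mapsTo_of_feasible (hA : IsMonomialMatrix A σ) (hS : Feasible A S) :
    Set.MapsTo σ S S := by
  intro u hu
  by_contra hσu
  refine hS (Matrix.det_eq_zero_of_row_eq_zero ⟨u, hu⟩ fun v => ?_)
  by_contra huv
  exact hσu ((hA u v).mp huv ▸ v.2)

theorem feasible_of_mapsTo (hA : IsMonomialMatrix A σ) (hσ : Set.InjOn σ S)
    (hS : Set.MapsTo σ S S) : Feasible A S := by
  intro hdet
  obtain ⟨x, hx, hxA⟩ := Matrix.exists_vecMul_eq_zero_iff.mpr hdet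
  refine hx (funext fun u => ?_)
  have entry_eq_zero : ∀ w : S, w ≠ u → A w (σ u) = 0 := fun w hwu => by
    by_contra hw
    exact hwu (Subtype.ext (hσ w.2 u.2 ((hA w (σ u)).mp hw).symm))
  have column : x u * A u (σ u) = 0 := by
    have column_sum : ∑ w : S, x w * A w (σ u) = 0 := congrFun hxA ⟨σ u, hS u.2⟩
    rwa [Finset.sum_eq_single u
      (fun w _ hwu => mul_eq_zero_of_right _ (entry_eq_zero w hwu)) (by simp)] at column_sum
  exact (mul_eq_zero.mp column).resolve_right ((hA u (σ u)).mpr rfl)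

theorem feasible_union_image (hA : IsMonomialMatrix A σ) (hσ : Function.Involutive σ)
    (X : Finset V) : Feasible A (X ∪ X.image σ) := by
  refine hA.feasible_of_mapsTo hσ.injective.injOn fun u hu => ?_
  rcases Finset.mem_union.mp hu with hu | hu
  · exact Finset.mem_union_right _ (Finset.mem_image_of_mem σ hu)
  · obtain ⟨x, hx, rfl⟩ := Finset.mem_image.mp hu
    rw [hσ x]
    exact Finset.mem_union_left _ hx

theorem union_image_subset_of_feasible (hA : IsMonomialMatrix A σ) (hXS : X ⊆ S)
    (hS : Feasible A S) : X ∪ X.image σ ⊆ S :=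
  Finset.union_subset hXS
    (Finset.image_subset_iff.mpr fun _ hx => hA.mapsTo_of_feasible hS (hXS hx))

theorem repairs_iff_eq_image (hA : IsMonomialMatrix A σ) (hσ : Function.Involutive σ)
    (hX : X.Nonempty) (hdisj : Disjoint X (X.image σ)) : Repairs A X Y ↔ Y = X.image σ := by
  constructor
  · rintro ⟨-, hXY, hfeas, hmin⟩
    have hsub : X ∪ X.image σ ⊆ X ∪ Y :=
      hA.union_image_subset_of_feasible Finset.subset_union_left hfeas
    have hunion : X ∪ X.image σ = X ∪ Y := by
      by_contra hne
      exact hmin _ Finset.subset_union_left (hsub.ssubset_of_ne hne)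
        (hA.feasible_union_image hσ X)
    rw [← Finset.union_sdiff_cancel_left (Finset.disjoint_iff_inter_eq_empty.mpr hXY), ← hunion,
      Finset.union_sdiff_cancel_left hdisj]
  · rintro rfl
    refine ⟨fun hfeas => ?_, Finset.disjoint_iff_inter_eq_empty.mp hdisj,
      hA.feasible_union_image hσ X,
      fun S hXS hS hfeas => hS.2 (hA.union_image_subset_of_feasible hXS hfeas)⟩
    obtain ⟨x, hx⟩ := hX
    exact Finset.disjoint_left.mp hdisj (hA.mapsTo_of_feasible hfeas hx)
      (Finset.mem_image_of_mem σ hx)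

theorem powersetCard_image_subset_of_repairs (hA : IsMonomialMatrix A σ)
    (hσ : Function.Involutive σ) (hT : Disjoint T (T.image σ)) {q : ℕ} (hq : 1 ≤ q)
    {𝒮 : Finset (Finset V)}
    (h𝒮 : ∀ X ⊆ T, X.card = q →
      (∃ Y ∈ (T.image σ).powersetCard q, Repairs A X Y) → ∃ Y ∈ 𝒮, Repairs A X Y) :
    (T.image σ).powersetCard q ⊆ 𝒮 := by
  intro Y hY
  obtain ⟨hYT, hYq⟩ := Finset.mem_powersetCard.mp hY
  obtain ⟨X, hXT, rfl⟩ := Finset.subset_image_iff.mp hYT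
  rw [Finset.card_image_of_injective X hσ.injective] at hYq
  have repairs_iff (Z : Finset V) : Repairs A X Z ↔ Z = X.image σ :=
    hA.repairs_iff_eq_image hσ (Finset.card_pos.mp (hYq ▸ hq))
      (hT.mono hXT (Finset.image_subset_image hXT))
  obtain ⟨Z, hZ, hXZ⟩ := h𝒮 X hXT hYq ⟨_, hY, (repairs_iff _).mpr rfl⟩
  exact (repairs_iff Z).mp hXZ ▸ hZ

end IsMonomialMatrix

theorem stmt_19_general (F : Type*) [Field F] (k q : ℕ) (hq : 1 ≤ q) :
    ∃ (V : Type) (_ : Fintype V) (_ : DecidableEq V) (A : Matrix V V F),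
      (∀ u v, A u v = - A v u) ∧ (∀ v, A v v = 0) ∧
      ∃ T : Finset V, T.card = k ∧
        (∀ u ∈ T, ∀ v ∈ T, A u v = 0) ∧
        ∃ 𝒮 : Finset (Finset V),
          (∀ Y ∈ 𝒮, Y.card = q ∧ ∀ y ∈ Y, y ∉ T) ∧
          ∀ 𝒮' ⊆ 𝒮,
            (∀ X ⊆ T, X.card = q →
              (∃ Y ∈ 𝒮, Repairs A X Y) → ∃ Y' ∈ 𝒮', Repairs A X Y') →
            k.choose q ≤ 𝒮'.card := by
  let T : Finset (Fin k ⊕ Fin k) := Finset.univ.map Function.Embedding.inl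
  have hJ := isMonomialMatrix_J (Fin k) F
  have hσ : Function.Involutive (Sum.swap : Fin k ⊕ Fin k → Fin k ⊕ Fin k) := Sum.swap_swap
  have hT : Disjoint T (T.image Sum.swap) := by simp [T, Finset.disjoint_left]
  have hTcard : T.card = k := by simp [T]
  refine ⟨Fin k ⊕ Fin k, inferInstance, inferInstance, Matrix.J (Fin k) F,
    fun u v => congrFun₂ (Matrix.J_transpose (Fin k) F) v u, ?_, T, hTcard,
    fun u hu v hv => hJ.apply_eq_zero_of_disjoint_image hT hu hv,
    (T.image Sum.swap).powersetCard q, fun Y hY => ?_, fun 𝒮' _ h𝒮' => ?_⟩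
  · rintro (_ | _) <;> simp [Matrix.J]
  · obtain ⟨hYT, hYq⟩ := Finset.mem_powersetCard.mp hY
    exact ⟨hYq, fun y hy => Finset.disjoint_right.mp hT (hYT hy)⟩
  · calc k.choose q = ((T.image Sum.swap).powersetCard q).card := by
          rw [Finset.card_powersetCard, Finset.card_image_of_injective T hσ.injective, hTcard]
      _ ≤ 𝒮'.card := Finset.card_le_card (hJ.powersetCard_image_subset_of_repairs hσ hT hq h𝒮')

/-- Lower bound for delta-matroid representative sets.
For all `k ≥ q ≥ 1` there are a field `F`, a skew-symmetric matrix `A` indexed by a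
finite set `V`, a terminal set `T ⊆ V` with `|T| = k` and `A[T] = 0`, and a family `𝒮`
of `q`-element subsets of `V ∖ T`, such that every `𝒮' ⊆ 𝒮` that, for each `X ⊆ T`
with `|X| = q`, retains a repairing set whenever `𝒮` contains one, must satisfy
`|𝒮'| ≥ C(k, q)`. -/
theorem stmt_19 (k q : ℕ) (hq : 1 ≤ q) (hqk : q ≤ k) :
    ∃ (F : Type) (_ : Field F) (V : Type) (_ : Fintype V) (_ : DecidableEq V)
      (A : Matrix V V F),
      (∀ u v, A u v = - A v u) ∧ (∀ v, A v v = 0) ∧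
      ∃ T : Finset V, T.card = k ∧
        (∀ u ∈ T, ∀ v ∈ T, A u v = 0) ∧
        ∃ 𝒮 : Finset (Finset V),
          (∀ Y ∈ 𝒮, Y.card = q ∧ ∀ y ∈ Y, y ∉ T) ∧
          ∀ 𝒮' ⊆ 𝒮,
            (∀ X ⊆ T, X.card = q →
              (∃ Y ∈ 𝒮, Repairs A X Y) → ∃ Y' ∈ 𝒮', Repairs A X Y') →
            k.choose q ≤ 𝒮'.card :=
  ⟨ℚ, inferInstance, stmt_19_general ℚ k q hq⟩
end
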